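/- arXiv:1602.09119 — 2 statements merged into one kernel-verified Lean document; each statement's English description precedes it below -/
import Mathlib

section
/- Let f(x) = x⁸ + 8x⁷ + 32x⁶ + 44x⁵ + 382x⁴ + 496x³ + 656x² − 20x + 1. Then f(x²) and f(−3x²) are both irreducible over ℚ of degree 16, the two degree 16 number fields they define are not isomorphic, and each has absolute discriminant |D_K| = 2¹⁶·3⁸·53⁸. -/
open Polynomial IntermediateField
open scoped MatrixGroups Classical NumberField

noncomputable section

abbrev Qbar := AlgebraicClosure ℚ

/-- The discriminant of a (finite-dimensional) subfield of `Qbar`. -/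
def absd (K : IntermediateField ℚ Qbar) : ℤ :=
  if h : FiniteDimensional ℚ K then
    haveI := h
    haveI : NumberField K := ⟨⟩
    NumberField.discr K
  else 0

def f5 : ℚ[X] :=
  X ^ 8 + 8 * X ^ 7 + 32 * X ^ 6 + 44 * X ^ 5 + 382 * X ^ 4 + 496 * X ^ 3 + 656 * X ^ 2 -
    20 * X + 1

/-- `f(x²)` -/
def g5a : ℚ[X] := f5.comp (X ^ 2)

/-- `f(−3x²)` -/
def g5b : ℚ[X] := f5.comp (-3 * X ^ 2)


def H2 : ℤ[X] := X^8+3*X^7+9*X^6+15*X^5+11*X^4+21*X^3+57*X^2-3*X+16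

def h2Q : ℚ[X] := X^8+3*X^7+9*X^6+15*X^5+11*X^4+21*X^3+57*X^2-3*X+16

def thP : ℚ[X] := C (-412483/83641) + C (-607094/83641)*X^1 + C (-276255/83641)*X^2 + C (-215094/83641)*X^3 + C (-180732/83641)*X^4 + C (-86506/83641)*X^5 + C (-28209/83641)*X^6 + C (-6886/83641)*X^7

def etQ : ℚ[X] := C (-776347/362352) + C (2551523/120784)*X^1 + C (6350617/362352)*X^2 + C (4796221/362352)*X^3 + C (553031/362352)*X^4 + C (406747/362352)*X^5 + C (101867/362352)*X^6 + C (4229/120784)*X^7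

def thF {L : Type*} [Field L] (x : L) : L := (-412483/83641) + (-607094/83641)*x + (-276255/83641)*x^2 + (-215094/83641)*x^3 + (-180732/83641)*x^4 + (-86506/83641)*x^5 + (-28209/83641)*x^6 + (-6886/83641)*x^7

def etF {L : Type*} [Field L] (x : L) : L := (-776347/362352) + (2551523/120784)*x + (6350617/362352)*x^2 + (4796221/362352)*x^3 + (553031/362352)*x^4 + (406747/362352)*x^5 + (101867/362352)*x^6 + (4229/120784)*x^7

lemma aeval_thP {L : Type*} [Field L] [Algebra ℚ L] (x : L) : aeval x thP = thF x := by
  simp [thP, thF, map_ofNat]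

lemma aeval_etQ {L : Type*} [Field L] [Algebra ℚ L] (x : L) : aeval x etQ = etF x := by
  simp [etQ, etF, map_ofNat]

lemma thF_pow2 {L : Type*} [Field L] [CharZero L] (η : L) (h : η^8+3*η^7+9*η^6+15*η^5+11*η^4+21*η^3+57*η^2-3*η+16 = 0) :
    thF η ^ 2 = (675985/83641) + (5461480/83641)*η + (1845938/83641)*η^2 + (1299612/83641)*η^3 + (1659304/83641)*η^4 + (943850/83641)*η^5 + (320420/83641)*η^6 + (95912/83641)*η^7 := by
  have h1 : thF η = (-412483/83641) + (-607094/83641)*η + (-276255/83641)*η^2 + (-215094/83641)*η^3 + (-180732/83641)*η^4 + (-86506/83641)*η^5 + (-28209/83641)*η^6 + (-6886/83641)*η^7 := rfl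
  rw [pow_succ, pow_one, h1]
  linear_combination ((7100135244/6995816881) + (4083041616/6995816881)*η + (3100588928/6995816881)*η^2 + (1977215625/6995816881)*η^3 + (821625269/6995816881)*η^4 + (246243360/6995816881)*η^5 + (47416996/6995816881)*η^6) * h

lemma thF_pow3 {L : Type*} [Field L] [CharZero L] (η : L) (h : η^8+3*η^7+9*η^6+15*η^5+11*η^4+21*η^3+57*η^2-3*η+16 = 0) :
    thF η ^ 3 = (7723925/83641) + (-28589500/83641)*η + (-7942575/83641)*η^2 + (-3239554/83641)*η^3 + (-7057152/83641)*η^4 + (-4581614/83641)*η^5 + (-1593327/83641)*η^6 + (-554142/83641)*η^7 := by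
  have h1 : thF η = (-412483/83641) + (-607094/83641)*η + (-276255/83641)*η^2 + (-215094/83641)*η^3 + (-180732/83641)*η^4 + (-86506/83641)*η^5 + (-28209/83641)*η^6 + (-6886/83641)*η^7 := rfl
  rw [pow_succ, thF_pow2 η h, h1]
  linear_combination ((-57804320730/6995816881) + (-27832042820/6995816881)*η + (-24257434414/6995816881)*η^2 + (-19523925426/6995816881)*η^3 + (-9099061168/6995816881)*η^4 + (-2930643632/6995816881)*η^5 + (-660450032/6995816881)*η^6) * h

lemma thF_pow4 {L : Type*} [Field L] [CharZero L] (η : L) (h : η^8+3*η^7+9*η^6+15*η^5+11*η^4+21*η^3+57*η^2-3*η+16 = 0) :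
    thF η ^ 4 = (-91489623/83641) + (75367056/83641)*η + (17579456/83641)*η^2 + (-5328992/83641)*η^3 + (12944476/83641)*η^4 + (11376756/83641)*η^5 + (4014560/83641)*η^6 + (1802152/83641)*η^7 := by
  have h1 : thF η = (-412483/83641) + (-607094/83641)*η + (-276255/83641)*η^2 + (-215094/83641)*η^3 + (-180732/83641)*η^4 + (-86506/83641)*η^5 + (-28209/83641)*η^6 + (-6886/83641)*η^7 := rfl
  rw [pow_succ, thF_pow3 η h, h1]
  linear_combination ((279143487598/6995816881) + (102324296028/6995816881)*η + (89021811972/6995816881)*η^2 + (88316407551/6995816881)*η^3 + (44621438999/6995816881)*η^4 + (15155975964/6995816881)*η^5 + (3815821812/6995816881)*η^6) * h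

lemma thF_pow5 {L : Type*} [Field L] [CharZero L] (η : L) (h : η^8+3*η^7+9*η^6+15*η^5+11*η^4+21*η^3+57*η^2-3*η+16 = 0) :
    thF η ^ 5 = (579852013/83641) + (292471010/83641)*η + (140171133/83641)*η^2 + (173057110/83641)*η^3 + (119312928/83641)*η^4 + (47895322/83641)*η^5 + (15710163/83641)*η^6 + (1808462/83641)*η^7 := by
  have h1 : thF η = (-412483/83641) + (-607094/83641)*η + (-276255/83641)*η^2 + (-215094/83641)*η^3 + (-180732/83641)*η^4 + (-86506/83641)*η^5 + (-28209/83641)*η^6 + (-6886/83641)*η^7 := rfl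
  rw [pow_succ, thF_pow4 η h, h1]
  linear_combination ((-672593003464/6995816881) + (-126573433268/6995816881)*η + (-93601330016/6995816881)*η^2 + (-189515981124/6995816881)*η^3 + (-112040527984/6995816881)*η^4 + (-41252309912/6995816881)*η^5 + (-12409618672/6995816881)*η^6) * h

lemma thF_pow6 {L : Type*} [Field L] [CharZero L] (η : L) (h : η^8+3*η^7+9*η^6+15*η^5+11*η^4+21*η^3+57*η^2-3*η+16 = 0) :
    thF η ^ 6 = (-2157911679/83641) + (-5279502784/83641)*η + (-1895642886/83641)*η^2 + (-1461502660/83641)*η^3 + (-1601389452/83641)*η^4 + (-861793154/83641)*η^5 + (-292156356/83641)*η^6 + (-80738568/83641)*η^7 := by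
  have h1 : thF η = (-412483/83641) + (-607094/83641)*η + (-276255/83641)*η^2 + (-215094/83641)*η^3 + (-180732/83641)*η^4 + (-86506/83641)*η^5 + (-28209/83641)*η^6 + (-6886/83641)*η^7 := rfl
  rw [pow_succ, thF_pow5 η h, h1]
  linear_combination ((-3668075445940/6995816881) + (-2630333223708/6995816881)*η + (-2238740954632/6995816881)*η^2 + (-1219721139759/6995816881)*η^3 + (-451832728203/6995816881)*η^4 + (-121835878980/6995816881)*η^5 + (-12453069332/6995816881)*η^6) * h

lemma thF_pow7 {L : Type*} [Field L] [CharZero L] (η : L) (h : η^8+3*η^7+9*η^6+15*η^5+11*η^4+21*η^3+57*η^2-3*η+16 = 0) :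
    thF η ^ 7 = (-280029883/83641) + (38171374540/83641)*η + (12205674677/83641)*η^2 + (7122744514/83641)*η^3 + (10414861612/83641)*η^4 + (6199879838/83641)*η^5 + (2126102717/83641)*η^6 + (677367366/83641)*η^7 := by
  have h1 : thF η = (-412483/83641) + (-607094/83641)*η + (-276255/83641)*η^2 + (-215094/83641)*η^3 + (-180732/83641)*η^4 + (-86506/83641)*η^5 + (-28209/83641)*η^6 + (-6886/83641)*η^7 := rfl
  rw [pow_succ, thF_pow6 η h, h1]
  linear_combination ((57095241408310/6995816881) + (29147135376768/6995816881)*η + (24707914298466/6995816881)*η^2 + (18394050197778/6995816881)*η^3 + (8292088071872/6995816881)*η^4 + (2621445594384/6995816881)*η^5 + (555965779248/6995816881)*η^6) * h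

lemma thF_pow8 {L : Type*} [Field L] [CharZero L] (η : L) (h : η^8+3*η^7+9*η^6+15*η^5+11*η^4+21*η^3+57*η^2-3*η+16 = 0) :
    thF η ^ 8 = (76446113945/83641) + (-167500327824/83641)*η + (-47144650336/83641)*η^2 + (-15042737456/83641)*η^3 + (-39860759768/83641)*η^4 + (-26823387912/83641)*η^5 + (-9305096944/83641)*η^6 + (-3391500704/83641)*η^7 := by
  have h1 : thF η = (-412483/83641) + (-607094/83641)*η + (-276255/83641)*η^2 + (-215094/83641)*η^3 + (-180732/83641)*η^4 + (-86506/83641)*η^5 + (-28209/83641)*η^6 + (-6886/83641)*η^7 := rfl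
  rw [pow_succ, thF_pow7 η h, h1]
  linear_combination ((-392407615640266/6995816881) + (-171397909374152/6995816881)*η + (-145913752832844/6995816881)*η^2 + (-125132131611849/6995816881)*η^3 + (-60019347461249/6995816881)*η^4 + (-19755144289928/6995816881)*η^5 + (-4664351682276/6995816881)*η^6) * h

lemma f_thF {L : Type*} [Field L] [CharZero L] (η : L) (h : η^8+3*η^7+9*η^6+15*η^5+11*η^4+21*η^3+57*η^2-3*η+16 = 0) :
    thF η ^ 8 + 8 * thF η ^ 7 + 32 * thF η ^ 6 + 44 * thF η ^ 5 + 382 * thF η ^ 4 + 496 * thF η ^ 3 + 656 * thF η ^ 2 -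
    20 * thF η + 1 = 0 := by
  rw [thF_pow8 η h, thF_pow7 η h, thF_pow6 η h, thF_pow5 η h, thF_pow4 η h, thF_pow3 η h, thF_pow2 η h, thF]
  ring

lemma etF_thF {L : Type*} [Field L] [CharZero L] (η : L) (h : η^8+3*η^7+9*η^6+15*η^5+11*η^4+21*η^3+57*η^2-3*η+16 = 0) :
    etF (thF η) = η := by
  rw [etF, thF_pow7 η h, thF_pow6 η h, thF_pow5 η h, thF_pow4 η h, thF_pow3 η h, thF_pow2 η h, thF]
  ring

def waF {L : Type*} [Field L] (x : L) : L := (-197481/83641) + (-224607/83641)*x + (-736657/83641)*x^2 + (159312/83641)*x^3 + (-300678/83641)*x^4 + (-56461/83641)*x^5 + (-45928/83641)*x^6 + (-9118/83641)*x^7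

lemma waF_sq {L : Type*} [Field L] [CharZero L] (η : L) (h : η^8+3*η^7+9*η^6+15*η^5+11*η^4+21*η^3+57*η^2-3*η+16 = 0) :
    waF η ^ 2 * (1 * thF η) = (37) + (10)*η + (32)*η^2 + (4)*η^3 + (17)*η^4 + (2)*η^5 + (2)*η^6 := by
  have h1 : waF η ^ 2 = (-19002599/83641) + (9003950/83641)*η + (-67186238/83641)*η^2 + (-7278452/83641)*η^3 + (-4674633/83641)*η^4 + (-19299478/83641)*η^5 + (-2553152/83641)*η^6 + (-2983934/83641)*η^7 := by
    rw [waF]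
    linear_combination ((101774695520/6995816881) + (-22441504091/6995816881)*η + (5777612633/6995816881)*η^2 + (2250088772/6995816881)*η^3 + (626374956/6995816881)*η^4 + (588129236/6995816881)*η^5 + (83137924/6995816881)*η^6) * h
  rw [h1, thF]
  linear_combination ((473712738670/6995816881) + (573347973541/6995816881)*η + (124440728165/6995816881)*η^2 + (194193463988/6995816881)*η^3 + (157781868246/6995816881)*η^4 + (40112690306/6995816881)*η^5 + (20547369524/6995816881)*η^6) * h

def wbF {L : Type*} [Field L] (x : L) : L := (10621/250923) + (-193604/250923)*x + (87321/83641)*x^2 + (-84963/83641)*x^3 + (24880/250923)*x^4 + (-14600/250923)*x^5 + (3464/83641)*x^6 + (1489/83641)*x^7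

lemma wbF_sq {L : Type*} [Field L] [CharZero L] (η : L) (h : η^8+3*η^7+9*η^6+15*η^5+11*η^4+21*η^3+57*η^2-3*η+16 = 0) :
    wbF η ^ 2 * (-3 * thF η) = (1) + (4)*η + (6)*η^2 + (8)*η^3 + (1)*η^4 := by
  have h1 : wbF η ^ 2 = (-336055/83641) + (85076/83641)*η + (-3422488/250923)*η^2 + (-1472840/250923)*η^3 + (157741/250923)*η^4 + (-1498460/250923)*η^5 + (-97066/250923)*η^6 + (-72550/83641)*η^7 := by
    rw [wbF]
    linear_combination ((15817786996/62962351929) + (-1293859414/62962351929)*η + (-229209608/62962351929)*η^2 + (25067644/6995816881)*η^3 + (-100323040/20987450643)*η^4 + (3664429/6995816881)*η^5 + (2217121/6995816881)*η^6) * h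
  rw [h1, thF]
  linear_combination ((-26427921286/6995816881) + (-38377546423/6995816881)*η + (-11624836225/6995816881)*η^2 + (-11248135848/6995816881)*η^3 + (-11460305276/6995816881)*η^4 + (-2311871626/6995816881)*η^5 + (-1498737900/6995816881)*η^6) * h


lemma H2_monic : H2.Monic := by unfold H2; monicity!

lemma H2_natDegree : H2.natDegree = 8 := by unfold H2; compute_degree!

lemma H2_map : H2.map (Int.castRingHom ℚ) = h2Q := by simp [H2, h2Q]

lemma h2Q_monic : h2Q.Monic := by unfold h2Q; monicity!

lemma h2Q_natDegree : h2Q.natDegree = 8 := by unfold h2Q; compute_degree!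

lemma H2_eval (k : ℤ) : H2.eval k = k^8+3*k^7+9*k^6+15*k^5+11*k^4+21*k^3+57*k^2-3*k+16 := by
  simp [H2]

lemma H2_noroot (k : ℤ) : H2.eval k ≠ 0 := by
  intro h
  rw [H2_eval] at h
  have hd : k ∣ 16 := ⟨-(k^7+3*k^6+9*k^5+15*k^4+11*k^3+21*k^2+57*k-3), by linear_combination h⟩
  have h1 : k ≤ 16 := Int.le_of_dvd (by norm_num) hd
  have h2 : -k ≤ 16 := Int.le_of_dvd (by norm_num) ((neg_dvd).2 hd)
  have h2 : -16 ≤ k := by linarith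
  interval_cases k <;> norm_num at h

/-- one-sided step: if `A * B = H2` with `A` monic and `A(-1)` odd then `A = 1`. -/
lemma H2_aux (A B : ℤ[X]) (hA : A.Monic) (h : A * B = H2) (hodd : ¬ (2:ℤ) ∣ A.eval (-1)) :
    A = 1 := by
  have hd : A.map (Int.castRingHom (ZMod 2)) ∣ X * (X + 1) ^ 7 := by
    refine ⟨B.map (Int.castRingHom (ZMod 2)), ?_⟩
    rw [← Polynomial.map_mul, h]
    have h2 : (2 : (ZMod 2)[X]) = 0 := by
      have : (C (2 : ZMod 2)) = 0 := by rw [show (2 : ZMod 2) = 0 from rfl, C_0]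
      rwa [map_ofNat] at this
    simp only [H2, Polynomial.map_add, Polynomial.map_sub, Polynomial.map_mul, Polynomial.map_pow, map_X,
      Polynomial.map_ofNat]
    linear_combination (-8 + 2*X - 25*X^2 + 12 * X^4 + 10 * X^5 + 6 * X^6 + 2 * X^7) * h2
  have hcop : IsCoprime (A.map (Int.castRingHom (ZMod 2))) ((X + 1) ^ 7) := by
    apply IsCoprime.pow_right
    have hirr : Irreducible (X + 1 : (ZMod 2)[X]) := by
      have := irreducible_X_sub_C (-1 : ZMod 2)
      rwa [map_neg, C_1, sub_neg_eq_add] at this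
    apply IsCoprime.symm
    rw [hirr.coprime_iff_not_dvd]
    intro hdv
    have : (X - C (-1 : ZMod 2)) ∣ A.map (Int.castRingHom (ZMod 2)) := by
      rwa [map_neg, C_1, sub_neg_eq_add]
    rw [dvd_iff_isRoot, IsRoot, ← (by simp : ((Int.castRingHom (ZMod 2)) (-1)) = -1), eval_map,
      eval₂_hom] at this
    apply hodd
    exact (ZMod.intCast_zmod_eq_zero_iff_dvd _ 2).1 (by simpa using this)
  have hX := hcop.dvd_of_dvd_mul_right hd
  have hdeg : A.natDegree ≤ 1 := by
    rw [← hA.natDegree_map (Int.castRingHom (ZMod 2))]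
    exact (natDegree_le_of_dvd hX X_ne_zero).trans natDegree_X_le
  by_cases h0 : A.natDegree = 0
  · exact hA.natDegree_eq_zero.mp h0
  exfalso
  have h1 : A.natDegree = 1 := by omega
  have : A = X + C (A.coeff 0) := hA.eq_X_add_C h1
  apply H2_noroot (-(A.coeff 0))
  rw [← h, this]
  simp

lemma H2_irr : Irreducible H2 := by
  rw [H2_monic.irreducible_iff_natDegree']
  refine ⟨by intro h; have := H2_natDegree; rw [h] at this; simp at this, ?_⟩
  intro A B hA hB h hB2
  rw [Finset.mem_Ioc] at hB2
  have hev : A.eval (-1) * B.eval (-1) = 58 := by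
    rw [← eval_mul, h, H2_eval]; norm_num
  by_cases hb : (2:ℤ) ∣ B.eval (-1)
  · have ha : ¬ (2:ℤ) ∣ A.eval (-1) := by
      intro ha
      have := mul_dvd_mul ha hb
      rw [hev] at this; norm_num at this
    have := H2_aux A B hA h ha
    rw [this, one_mul] at h
    rw [h, H2_natDegree] at hB2; omega
  · have := H2_aux B A hB (by rw [mul_comm]; exact h) hb
    rw [this] at hB2; simp at hB2

lemma h2Q_irr : Irreducible h2Q := by
  rw [← H2_map]
  exact (H2_monic.irreducible_iff_irreducible_map_fraction_map (K := ℚ)).1 H2_irr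

lemma f5_monic : f5.Monic := by unfold f5; monicity!

lemma f5_natDegree : f5.natDegree = 8 := by unfold f5; compute_degree!

lemma aeval_f5 {L : Type*} [Field L] [Algebra ℚ L] (x : L) : aeval x f5 =
    x^8+8*x^7+32*x^6+44*x^5+382*x^4+496*x^3+656*x^2-20*x+1 := by
  simp [f5, map_ofNat]

lemma aeval_h2Q {L : Type*} [Field L] [Algebra ℚ L] (x : L) : aeval x h2Q =
    x^8+3*x^7+9*x^6+15*x^5+11*x^4+21*x^3+57*x^2-3*x+16 := by
  simp [h2Q, map_ofNat]

lemma f5_transfer : Irreducible f5 ∧ f5 ∣ h2Q.comp etQ ∧ f5 ∣ thP.comp etQ - X := by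
  obtain ⟨η, hη⟩ : ∃ η : Qbar, aeval η h2Q = 0 :=
    IsAlgClosed.exists_aeval_eq_zero Qbar h2Q (by
      rw [degree_eq_natDegree h2Q_irr.ne_zero, h2Q_natDegree]; norm_num)
  have hη' := hη
  rw [aeval_h2Q] at hη'
  have hf := f_thF η hη'
  have he := etF_thF η hη'
  rw [← aeval_f5] at hf
  have hint : IsIntegral ℚ (thF η) := ⟨f5, f5_monic, hf⟩
  have hint2 : IsIntegral ℚ η := ⟨h2Q, h2Q_monic, hη⟩
  have htop : ℚ⟮thF η⟯ = ℚ⟮η⟯ := by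
    apply le_antisymm
    · rw [IntermediateField.adjoin_simple_le_iff, ← aeval_thP]
      exact IntermediateField.algebra_adjoin_le_adjoin ℚ _ (aeval_mem_adjoin_singleton _ _)
    · rw [IntermediateField.adjoin_simple_le_iff]
      have h3 : aeval (thF η) etQ ∈ ℚ⟮thF η⟯ :=
        IntermediateField.algebra_adjoin_le_adjoin ℚ _ (aeval_mem_adjoin_singleton _ _)
      rwa [aeval_etQ, he] at h3
  have hdeg : (minpoly ℚ (thF η)).natDegree = 8 := by
    rw [← IntermediateField.adjoin.finrank hint, htop, IntermediateField.adjoin.finrank hint2,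
      ← minpoly.eq_of_irreducible_of_monic h2Q_irr hη h2Q_monic, h2Q_natDegree]
  have hmin : minpoly ℚ (thF η) = f5 := by
    have hdv := minpoly.dvd ℚ _ hf
    refine (eq_of_monic_of_dvd_of_natDegree_le (minpoly.monic hint) f5_monic hdv ?_).symm
    rw [hdeg, f5_natDegree]
  rw [← hmin]
  refine ⟨minpoly.irreducible hint, minpoly.dvd ℚ _ ?_, minpoly.dvd ℚ _ ?_⟩
  · rw [aeval_comp, aeval_etQ, he, hη]
  · rw [map_sub, aeval_comp, aeval_etQ, he, aeval_thP, aeval_X, sub_self]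

lemma f5_root {L : Type*} [Field L] [Algebra ℚ L] (θ : L) (h : aeval θ f5 = 0) :
    aeval (etF θ) h2Q = 0 ∧ thF (etF θ) = θ := by
  obtain ⟨-, h1, h2⟩ := f5_transfer
  constructor
  · rw [← aeval_etQ, ← aeval_comp]
    exact aeval_eq_zero_of_dvd_aeval_eq_zero h1 h
  · have := aeval_eq_zero_of_dvd_aeval_eq_zero h2 h
    rw [map_sub, aeval_comp, aeval_etQ, aeval_thP, aeval_X, sub_eq_zero] at this
    exact this


def hc : Fin 8 → ℤ := ![16, -3, 57, 21, 11, 15, 9, 3]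

def rowsOK (L : Matrix (Fin 8) (Fin 8) ℤ) : Prop :=
  ∀ j : Fin 7, ∀ i : Fin 8, L j.succ i = (if i = 0 then 0 else L j.castSucc (i - 1)) - L j.castSucc 7 * hc i

lemma det_cert (L U T : Matrix (Fin 8) (Fin 8) ℤ) (d : ℤ) (hm : U * L = T)
    (hU : ∀ i j : Fin 8, (bif Nat.ble j.val i.val then 0 else U i j) = 0)
    (hT : ∀ i j : Fin 8, (bif Nat.ble i.val j.val then 0 else T i j) = 0)
    (h0 : ∏ i, U i i ≠ 0) (h : (∏ i, U i i) * d = ∏ i, T i i) : L.det = d := by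
  have h1 : U.det = ∏ i, U i i := Matrix.det_of_isLowerTriangular U (fun i j hij => by
    have := hU i j
    rwa [show Nat.ble j.val i.val = false from Bool.eq_false_iff.2 (fun h => absurd (Nat.le_of_ble_eq_true h) (not_le.2 hij))] at this)
  have h2 : T.det = ∏ i, T i i := Matrix.det_of_isUpperTriangular (fun i j hij => by
    have := hT i j
    rwa [show Nat.ble i.val j.val = false from Bool.eq_false_iff.2 (fun h => absurd (Nat.le_of_ble_eq_true h) (not_le.2 hij))] at this)
  have h3 : U.det * L.det = T.det := by rw [← Matrix.det_mul, hm]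
  rw [h1, h2, ← h] at h3
  exact mul_left_cancel₀ h0 h3

section normE
variable {E : Type*} [Field E] [NumberField E] (η : E)

lemma minpoly_eta (hη : aeval η h2Q = 0) : minpoly ℚ η = h2Q :=
  (minpoly.eq_of_irreducible_of_monic h2Q_irr hη h2Q_monic).symm

lemma norm_cert (hη : aeval η h2Q = 0) (htop : Algebra.adjoin ℚ {η} = ⊤) (s : E)
    (L : Matrix (Fin 8) (Fin 8) ℤ) (hL : rowsOK L) (hs : s = ∑ i, (L 0 i : E) * η ^ (i : ℕ)) :
    Algebra.norm ℚ s = (L.det : ℚ) := by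
  have hint : IsIntegral ℚ η := ⟨h2Q, h2Q_monic, hη⟩
  have hrow : ∀ j : Fin 8, s * η ^ (j : ℕ) = ∑ i, (L j i : E) * η ^ (i : ℕ) := by
    intro j
    induction j using Fin.induction with
    | zero => simpa using hs
    | succ j ih =>
      rw [Fin.val_succ, pow_succ, ← mul_assoc, ← Fin.val_castSucc, ih]
      have h8 := hη
      rw [aeval_h2Q] at h8
      have e := fun i => hL j i
      simp only [Fin.sum_univ_eight, e]
      simp [hc]
      linear_combination (L j.castSucc 7 : E) * h8
  let B := PowerBasis.ofAdjoinEqTop hint htop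
  have hdim : B.dim = 8 := by
    rw [← B.natDegree_minpoly, PowerBasis.ofAdjoinEqTop_gen, minpoly_eta η hη, h2Q_natDegree]
  let b := B.basis.reindex (finCongr hdim)
  have hb : ∀ i, b i = η ^ (i : ℕ) := by
    intro i
    change B.basis.reindex (finCongr hdim) i = _
    rw [Module.Basis.reindex_apply, B.basis_eq_pow, PowerBasis.ofAdjoinEqTop_gen]
    simp
  rw [Algebra.norm_eq_matrix_det b]
  have : Algebra.leftMulMatrix b s = (L.map (Int.castRingHom ℚ)).transpose := by
    ext i j
    rw [Algebra.leftMulMatrix_eq_repr_mul, hb, hrow]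
    have : ∑ i, (L j i : E) * η ^ (i : ℕ) = ∑ i, (L j i : ℚ) • b i := by
      refine Finset.sum_congr rfl fun i _ => ?_
      rw [hb, Algebra.smul_def]; simp
    rw [this, b.repr_sum_self]
    rfl
  rw [this, Matrix.det_transpose, ← RingHom.mapMatrix_apply, ← RingHom.map_det]
  rfl

end normE

def Ls : Matrix (Fin 8) (Fin 8) ℤ := !![14, 6, 1, 0, 0, 0, 0, 0; 0, 14, 6, 1, 0, 0, 0, 0; 0, 0, 14, 6, 1, 0, 0, 0; 0, 0, 0, 14, 6, 1, 0, 0; 0, 0, 0, 0, 14, 6, 1, 0; 0, 0, 0, 0, 0, 14, 6, 1; -16, 3, -57, -21, -11, -15, 5, 3; -48, -7, -168, -120, -54, -56, -42, -4]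

def LsU : Matrix (Fin 8) (Fin 8) ℤ := !![1, 0, 0, 0, 0, 0, 0, 0; 0, 1, 0, 0, 0, 0, 0, 0; 0, 0, 1, 0, 0, 0, 0, 0; 0, 0, 0, 1, 0, 0, 0, 0; 0, 0, 0, 0, 1, 0, 0, 0; 0, 0, 0, 0, 0, 1, 0, 0; 1075648, -662676, 4039168, -271950, 567546, 784611, 941192, 0; 4357056, -1823348, 15830808, 2131234, 2081262, 3632415, 1552536, 753296]

def LsT : Matrix (Fin 8) (Fin 8) ℤ := !![14, 6, 1, 0, 0, 0, 0, 0; 0, 14, 6, 1, 0, 0, 0, 0; 0, 0, 14, 6, 1, 0, 0, 0; 0, 0, 0, 14, 6, 1, 0, 0; 0, 0, 0, 0, 14, 6, 1, 0; 0, 0, 0, 0, 0, 14, 6, 1; 0, 0, 0, 0, 0, 0, 9981172, 3608187; 0, 0, 0, 0, 0, 0, 0, 5276839]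

lemma Ls_det : Ls.det = 559344934 := det_cert Ls LsU LsT _ (by decide +kernel) (by decide +kernel) (by decide +kernel)
  (by decide +kernel) (by decide +kernel)

lemma Ls_rows : rowsOK Ls := by unfold rowsOK; decide +kernel

def Ld : Matrix (Fin 8) (Fin 8) ℤ := !![-3, 114, 63, 44, 75, 54, 21, 8; -128, 21, -342, -105, -44, -45, -18, -3; 48, -137, 192, -279, -72, 1, -18, -9; 144, 21, 376, 381, -180, 63, 82, 9; -144, 171, -492, 187, 282, -315, -18, 55; -880, 21, -2964, -1647, -418, -543, -810, -183; 2928, -1429, 10452, 879, 366, 2327, 1104, -261; 4176, 2145, 13448, 15933, 3750, 4281, 4676, 1887]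

def LdU : Matrix (Fin 8) (Fin 8) ℤ := !![1, 0, 0, 0, 0, 0, 0, 0; -128, 3, 0, 0, 0, 0, 0, 0; 16528, 5061, 14529, 0, 0, 0, 0, 0; -21952, 256740, 53277, 209997, 0, 0, 0, 0; 18585760, 20931042, 144605874, 63843081, 93052465, 0, 0, 0; 32179072, 41583288, 193405782, 101973750, 115602919, 2160999, 0, 0; -1856978368, 860728212, -5796112156, 1435025466, 1815386162, 1780868247, 684682943, 0; 17967933152, -7510895562, 65401538966, 4623681486, 3574723124, 7212049680, -1740846589, 1735150341]

def LdT : Matrix (Fin 8) (Fin 8) ℤ := !![-3, 114, 63, 44, 75, 54, 21, 8; 0, -14529, -9090, -5947, -9732, -7047, -2742, -1033; 0, 0, 2099970, -3857764, -29172, 679296, -5532, -13720; 0, 0, 0, 37220986, -54578364, 544380, 11178456, 464644; 0, 0, 0, 0, 4810383774, -25083072348, 970824744, 4476913392; 0, 0, 0, 0, 0, -31104167982, 976543020, 5272492152; 0, 0, 0, 0, 0, 0, -551777808438, -357112671396; 0, 0, 0, 0, 0, 0, 0, 2224669768158]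

lemma Ld_det : Ld.det = 286158667167986601024 := det_cert Ld LdU LdT _ (by decide +kernel) (by decide +kernel) (by decide +kernel)
  (by decide +kernel) (by decide +kernel)

lemma Ld_rows : rowsOK Ld := by unfold rowsOK; decide +kernel

def Le : Matrix (Fin 8) (Fin 8) ℤ := !![2, 1, 0, 0, 0, 0, 0, 0; 0, 2, 1, 0, 0, 0, 0, 0; 0, 0, 2, 1, 0, 0, 0, 0; 0, 0, 0, 2, 1, 0, 0, 0; 0, 0, 0, 0, 2, 1, 0, 0; 0, 0, 0, 0, 0, 2, 1, 0; 0, 0, 0, 0, 0, 0, 2, 1; -16, 3, -57, -21, -11, -15, -9, -1]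

def LeU : Matrix (Fin 8) (Fin 8) ℤ := !![1, 0, 0, 0, 0, 0, 0, 0; 0, 1, 0, 0, 0, 0, 0, 0; 0, 0, 1, 0, 0, 0, 0, 0; 0, 0, 0, 1, 0, 0, 0, 0; 0, 0, 0, 0, 1, 0, 0, 0; 0, 0, 0, 0, 0, 1, 0, 0; 0, 0, 0, 0, 0, 0, 1, 0; 512, -352, 2000, -328, 516, 222, 177, 64]

def LeT : Matrix (Fin 8) (Fin 8) ℤ := !![2, 1, 0, 0, 0, 0, 0, 0; 0, 2, 1, 0, 0, 0, 0, 0; 0, 0, 2, 1, 0, 0, 0, 0; 0, 0, 0, 2, 1, 0, 0, 0; 0, 0, 0, 0, 2, 1, 0, 0; 0, 0, 0, 0, 0, 2, 1, 0; 0, 0, 0, 0, 0, 0, 2, 1; 0, 0, 0, 0, 0, 0, 0, 113]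

lemma Le_det : Le.det = 226 := det_cert Le LeU LeT _ (by decide +kernel) (by decide +kernel) (by decide +kernel)
  (by decide +kernel) (by decide +kernel)

lemma Le_rows : rowsOK Le := by unfold rowsOK; decide +kernel



section discE
variable {E : Type*} [Field E] [NumberField E]

lemma span_pair_pow_le {R : Type*} [CommRing R] (p t : R) (e : ℕ) :
    Ideal.span {p, t} ^ e ≤ Ideal.span {p, t ^ e} := by
  induction e with
  | zero =>
    intro x _
    rw [pow_zero, Ideal.mem_span_pair]
    exact ⟨0, x, by ring⟩
  | succ e ih =>
    rw [pow_succ]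
    refine (Ideal.mul_mono_left ih).trans ?_
    rw [Ideal.span_pair_mul_span_pair, Ideal.span_le]
    have hp : p ∈ Ideal.span {p, t ^ (e + 1)} := Ideal.subset_span (by simp)
    have ht : t ^ (e + 1) ∈ Ideal.span {p, t ^ (e + 1)} := Ideal.subset_span (by simp)
    rintro x (rfl | rfl | rfl | rfl)
    · exact Ideal.mul_mem_left _ _ hp
    · exact Ideal.mul_mem_right _ _ hp
    · exact Ideal.mul_mem_left _ _ hp
    · rw [← pow_succ]; exact ht

lemma mem_pow_cert {R : Type*} [CommRing R] (p t s g G T C : R) (e : ℕ)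
    (h1 : s * t ^ e + p * g = 0) (h2 : g * G + t * T + p * C = 1) :
    p ∈ Ideal.span {p, t} ^ e := by
  have hp : p ∈ Ideal.span {p, t} := Ideal.subset_span (by simp)
  have ht : t ∈ Ideal.span {p, t} := Ideal.subset_span (by simp)
  have key : ∀ k, k ≤ e → p ∈ Ideal.span {p, t} ^ k := by
    intro k
    induction k with
    | zero => simp
    | succ k ih =>
      intro hk
      have h3 := ih (by omega)
      have h4 : p = p * (t * T + p * C) + (t ^ e) * (- s * G) := by
        linear_combination (-p) * h2 + G * h1
      suffices H : p * (t * T + p * C) + (t ^ e) * (- s * G) ∈ Ideal.span {p, t} ^ (k + 1) by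
        rwa [← h4] at H
      apply Ideal.add_mem
      · rw [pow_succ]
        apply Ideal.mul_mem_mul h3
        exact Ideal.add_mem _ (Ideal.mul_mem_right _ _ ht) (Ideal.mul_mem_right _ _ hp)
      · exact Ideal.mul_mem_right _ _ (Ideal.pow_le_pow_right hk (Ideal.pow_mem_pow ht e))
  exact key e le_rfl

lemma ram_cert (hE : Module.finrank ℚ E = 8) (p : ℕ) (hp : p.Prime) (t s g G T C : 𝓞 E) (e : ℕ) (he : e ≠ 0)
    (h1 : s * t ^ e + p * g = 0) (h2 : g * G + t * T + p * C = 1) :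
    (Ideal.absNorm (Ideal.span {(p : 𝓞 E), t})) ^ e ∣ p ^ 8 ∧
    p ^ 8 ∣ (Ideal.absNorm (Ideal.span {(p : 𝓞 E), t})) ^ e * (Algebra.norm ℤ s).natAbs ∧
    (Ideal.absNorm (Ideal.span {(p : 𝓞 E), t})) ^ (e - 1) ∣ (NumberField.discr E).natAbs := by
  have hN : Ideal.absNorm (Ideal.span {(p : 𝓞 E)}) = p ^ 8 := by
    rw [Ideal.absNorm_span_singleton, ← map_natCast (algebraMap ℤ (𝓞 E)) p, Algebra.norm_algebraMap,
      NumberField.RingOfIntegers.rank, hE]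
    simp [Int.natAbs_pow]
  have hmem := mem_pow_cert (p : 𝓞 E) t s g G T C e h1 h2
  have hdvd : (Ideal.span {(p : 𝓞 E), t}) ^ e ∣ Ideal.span {(p : 𝓞 E)} := by
    rw [Ideal.dvd_iff_le, Ideal.span_singleton_le_iff_mem]; exact hmem
  refine ⟨?_, ?_, ?_⟩
  · rw [← hN, ← map_pow]
    exact _root_.map_dvd Ideal.absNorm hdvd
  · rw [← hN, ← map_pow, ← Ideal.absNorm_span_singleton, ← map_mul]
    apply _root_.map_dvd Ideal.absNorm
    rw [Ideal.dvd_iff_le]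
    refine (Ideal.mul_mono_left (span_pair_pow_le _ _ _)).trans ?_
    rw [Ideal.mul_le]
    intro x hx y hy
    rw [Ideal.mem_span_singleton] at hy ⊢
    rw [Ideal.mem_span_pair] at hx
    obtain ⟨a, b, rfl⟩ := hx
    obtain ⟨c, rfl⟩ := hy
    refine ⟨a * s * c - b * g * c, ?_⟩
    linear_combination (b * c) * h1
  · rw [← NumberField.absNorm_differentIdeal E (𝓞 E), ← map_pow]
    apply _root_.map_dvd Ideal.absNorm
    have hpi : Prime (p : ℤ) := Nat.prime_iff_prime_int.1 hp
    have : (Ideal.span {(p : ℤ)}).IsMaximal :=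
      ((Ideal.span_singleton_prime hpi.ne_zero).2 hpi).isMaximal
        (by rw [Ne, Ideal.span_singleton_eq_bot]; exact hpi.ne_zero)
    refine pow_sub_one_dvd_differentIdeal_aux ℤ ℚ E (p := Ideal.span {(p : ℤ)}) _ he ?_ ?_
    · rw [Ne, Ideal.span_singleton_eq_bot]; exact hpi.ne_zero
    · rw [Ideal.map_span, Set.image_singleton]
      simpa using hdvd

lemma norm_int (e : 𝓞 E) (he : aeval (e : E) h2Q = 0) (htop : Algebra.adjoin ℚ {(e : E)} = ⊤) (s : 𝓞 E)
    (L : Matrix (Fin 8) (Fin 8) ℤ) (hL : rowsOK L) (hs : s = ∑ i, (L 0 i : 𝓞 E) * e ^ (i : ℕ)) :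
    Algebra.norm ℤ s = L.det := by
  have h := norm_cert (e : E) he htop (s : E) L hL (by rw [hs]; simp)
  rw [← Algebra.coe_norm_int] at h
  exact_mod_cast h

lemma finrank_E (e : E) (he : aeval e h2Q = 0) (htop : Algebra.adjoin ℚ {e} = ⊤) :
    Module.finrank ℚ E = 8 := by
  have hint : IsIntegral ℚ e := ⟨h2Q, h2Q_monic, he⟩
  rw [(PowerBasis.ofAdjoinEqTop hint htop).finrank, ← (PowerBasis.ofAdjoinEqTop hint htop).natDegree_minpoly,
    PowerBasis.ofAdjoinEqTop_gen, minpoly_eta e he, h2Q_natDegree]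

lemma e_rel (e : 𝓞 E) (he : aeval (e : E) h2Q = 0) :
    e^8+3*e^7+9*e^6+15*e^5+11*e^4+21*e^3+57*e^2-3*e+16 = 0 := by
  rw [aeval_h2Q] at he
  apply NumberField.RingOfIntegers.coe_injective
  simpa [map_ofNat] using he

lemma deriv_mem (t : 𝓞 E) (htop : Algebra.adjoin ℚ {(t : E)} = ⊤) (F : ℤ[X])
    (hmin : minpoly ℚ (t : E) = F.map (Int.castRingHom ℚ)) :
    aeval t (derivative F) ∈ differentIdeal ℤ (𝓞 E) := by
  have h1 : minpoly ℤ t = F := by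
    have h := minpoly.isIntegrallyClosed_eq_field_fractions ℚ E (s := t) (Algebra.IsIntegral.isIntegral (R := ℤ) t)
    have h' : (minpoly ℤ t).map (algebraMap ℤ ℚ) = F.map (algebraMap ℤ ℚ) := by rw [← h]; exact hmin
    exact Polynomial.map_injective _ (algebraMap ℤ ℚ).injective_int h'
  have := aeval_derivative_mem_differentIdeal ℤ ℚ E t htop
  rwa [h1] at this

lemma norm_dvd_of_mem (t : 𝓞 E) (h : t ∈ differentIdeal ℤ (𝓞 E)) :
    (NumberField.discr E).natAbs ∣ (Algebra.norm ℤ t).natAbs := by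
  rw [← NumberField.absNorm_differentIdeal E (𝓞 E), ← Ideal.absNorm_span_singleton]
  apply _root_.map_dvd Ideal.absNorm
  rwa [Ideal.dvd_iff_le, Ideal.span_singleton_le_iff_mem]

def F5Z : ℤ[X] := X ^ 8 + 8 * X ^ 7 + 32 * X ^ 6 + 44 * X ^ 5 + 382 * X ^ 4 + 496 * X ^ 3 + 656 * X ^ 2 -
    20 * X + 1

/-- The prime above 2. -/
def J2 (e : 𝓞 E) : Ideal (𝓞 E) := Ideal.span {((2 : ℕ) : 𝓞 E), 1 + e}

lemma two_cert (e : 𝓞 E) (he : aeval (e : E) h2Q = 0) (htop : Algebra.adjoin ℚ {(e : E)} = ⊤) :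
    Ideal.absNorm (J2 e) = 2 ∧ (2 : 𝓞 E) ∈ (J2 e) ^ 7 ∧ 2 ^ 6 ∣ (NumberField.discr E).natAbs := by
  have h := e_rel e he
  have h1 : ((2) + (1)*e) * (1 + e) ^ 7 + ((2 : ℕ) : 𝓞 E) * ((7) + (-9)*e + (4)*e^2 + (-35)*e^3 + (-47)*e^4 + (-31)*e^5 + (-13)*e^6 + (-3)*e^7) = 0 := by
    push_cast; linear_combination h
  have h2 : ((7) + (-9)*e + (4)*e^2 + (-35)*e^3 + (-47)*e^4 + (-31)*e^5 + (-13)*e^6 + (-3)*e^7) * ((1)) + (1 + e) * ((1)*e + (1)*e^2 + (1)*e^4 + (1)*e^6) + ((2 : ℕ) : 𝓞 E) * ((-3) + (4)*e + (-3)*e^2 + (17)*e^3 + (23)*e^4 + (15)*e^5 + (6)*e^6 + (1)*e^7) = 1 := by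
    push_cast; ring
  obtain ⟨c1, c2, c3⟩ := ram_cert (finrank_E (e : E) he htop) 2 Nat.prime_two (1 + e) _ _ _ _ _ 7 (by norm_num) h1 h2
  have hm := mem_pow_cert _ (1 + e) _ _ _ _ _ 7 h1 h2
  have hn : Algebra.norm ℤ ((2) + (1)*e) = 226 := by
    rw [norm_int e he htop _ Le Le_rows, Le_det]
    simp [Le, Fin.sum_univ_eight]
  rw [hn] at c2
  rw [← J2] at c1 c2 c3 hm
  have hN : Ideal.absNorm (J2 e) = 2 := by
    obtain ⟨k, hk, hk2⟩ := (Nat.dvd_prime_pow Nat.prime_two).1 ((dvd_pow_self _ (by norm_num : 7 ≠ 0)).trans c1)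
    rw [hk2] at c1 c2 ⊢
    rw [← pow_mul] at c1
    have := (Nat.pow_dvd_pow_iff_le_right (by norm_num : 1 < 2)).1 c1
    interval_cases k
    · norm_num at c2
    · rfl
    all_goals omega
  refine ⟨hN, by simpa using hm, ?_⟩
  rw [hN] at c3
  simpa using c3

lemma discr_E (e t : 𝓞 E) (he : aeval (e : E) h2Q = 0) (htop : Algebra.adjoin ℚ {(e : E)} = ⊤)
    (ht : aeval (t : E) f5 = 0) (httop : Algebra.adjoin ℚ {(t : E)} = ⊤) :
    (NumberField.discr E).natAbs = 2 ^ 6 * 3 ^ 4 * 53 ^ 4 := by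
  have h := e_rel e he
  have hE := finrank_E (e : E) he htop
  obtain ⟨-, -, d2⟩ := two_cert e he htop
  have d3 : 3 ^ 4 ∣ (NumberField.discr E).natAbs := by
    have h1 : ((1)) * ((1) + (1)*e^4) ^ 2 + ((3 : ℕ) : 𝓞 E) * ((5) + (-1)*e + (19)*e^2 + (7)*e^3 + (3)*e^4 + (5)*e^5 + (3)*e^6 + (1)*e^7) = 0 := by
      push_cast; linear_combination h
    have h2 : ((5) + (-1)*e + (19)*e^2 + (7)*e^3 + (3)*e^4 + (5)*e^5 + (3)*e^6 + (1)*e^7) * ((1) + (1)*e^2) + ((1) + (1)*e^4) * ((-1) + (1)*e + (-1)*e^5) + ((3 : ℕ) : 𝓞 E) * ((-1) + (-8)*e^2 + (-2)*e^3 + (-7)*e^4 + (-4)*e^5 + (-2)*e^6 + (-2)*e^7 + (-1)*e^8) = 1 := by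
      push_cast; ring
    obtain ⟨c1, c2, c3⟩ := ram_cert hE 3 Nat.prime_three _ _ _ _ _ _ 2 (by norm_num) h1 h2
    rw [map_one, Int.natAbs_one, mul_one, show 3 ^ 8 = (3 ^ 4) ^ 2 by norm_num, Nat.pow_dvd_pow_iff (by norm_num)] at c2
    exact c2.trans (by simpa using c3)
  have d53 : 53 ^ 4 ∣ (NumberField.discr E).natAbs := by
    have h1 : ((14) + (6)*e + (1)*e^2) * ((21) + (-1)*e + (1)*e^2) ^ 3 + ((53 : ℕ) : 𝓞 E) * ((-2446) + (-699)*e + (-390)*e^2 + (-98)*e^3 + (-29)*e^4 + (-4)*e^5 + (-1)*e^6) = 0 := by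
      push_cast; linear_combination h
    have h2 : ((-2446) + (-699)*e + (-390)*e^2 + (-98)*e^3 + (-29)*e^4 + (-4)*e^5 + (-1)*e^6) * ((1) + (-24)*e) + ((21) + (-1)*e + (1)*e^2) * ((8) + (22)*e + (-25)*e^2 + (11)*e^3 + (-13)*e^4 + (-24)*e^5) + ((53 : ℕ) : 𝓞 E) * ((43) + (-1103)*e + (-299)*e^2 + (-180)*e^3 + (-38)*e^4 + (-4)*e^5 + (-2)*e^6) = 1 := by
      push_cast; ring
    have p53 : Nat.Prime 53 := by norm_num
    obtain ⟨c1, c2, c3⟩ := ram_cert hE 53 p53 _ _ _ _ _ _ 3 (by norm_num) h1 h2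
    have hn : Algebra.norm ℤ ((14) + (6)*e + (1)*e^2) = 53 ^ 2 * 199126 := by
      rw [norm_int e he htop _ Ls Ls_rows, Ls_det]
      · norm_num
      · simp [Ls, Fin.sum_univ_eight]
    rw [hn] at c2
    have c4 : 53 ^ 6 ∣ (Ideal.absNorm (Ideal.span {((53 : ℕ) : 𝓞 E), (21) + (-1)*e + (1)*e^2})) ^ 3 := by
      have : 53 ^ 2 * 53 ^ 6 ∣ 53 ^ 2 * (199126 * (Ideal.absNorm (Ideal.span {((53 : ℕ) : 𝓞 E), (21) + (-1)*e + (1)*e^2})) ^ 3) := by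
        refine Dvd.dvd.trans ?_ (c2.trans (dvd_of_eq ?_))
        · norm_num
        · rw [show (53 ^ 2 * 199126 : ℤ).natAbs = 53 ^ 2 * 199126 by norm_num]; ring
      have := Nat.dvd_of_mul_dvd_mul_left (by norm_num) this
      exact (Nat.Coprime.pow_left 6 (by norm_num)).dvd_of_dvd_mul_left this
    rw [show 53 ^ 6 = (53 ^ 2) ^ 3 by norm_num, Nat.pow_dvd_pow_iff (by norm_num)] at c4
    refine Dvd.dvd.trans ?_ c3
    rw [show 53 ^ 4 = (53 ^ 2) ^ 2 by norm_num]
    exact pow_dvd_pow_of_dvd c4 2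
  have u1 : (NumberField.discr E).natAbs ∣ 286158667167986601024 := by
    have hm := deriv_mem e htop H2 (by rw [minpoly_eta _ he, H2_map])
    have hn := norm_dvd_of_mem _ hm
    have : Algebra.norm ℤ (aeval e (derivative H2)) = 286158667167986601024 := by
      rw [norm_int e he htop _ Ld Ld_rows, Ld_det]
      simp [Ld, Fin.sum_univ_eight, H2, map_ofNat]
      ring
    rwa [this] at hn
  have u2 : (NumberField.discr E).natAbs ∣ 5219134133184 ^ 8 := by
    have hm := deriv_mem t httop F5Z (by
      rw [← minpoly.eq_of_irreducible_of_monic f5_transfer.1 ht f5_monic]; simp [F5Z, f5])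
    have hm2 : ((5219134133184 : ℕ) : 𝓞 E) ∈ differentIdeal ℤ (𝓞 E) := by
      have hf : t^8+8*t^7+32*t^6+44*t^5+382*t^4+496*t^3+656*t^2-20*t+1 = 0 := by
        rw [aeval_f5] at ht
        apply NumberField.RingOfIntegers.coe_injective
        simpa [map_ofNat] using ht
      have : ((5219134133184 : ℕ) : 𝓞 E) = ((41096359489) + (-3002641974950)*t + (-2272857317328)*t^2 + (-1729419736988)*t^3 + (-201428352947)*t^4 + (-145252534326)*t^5 + (-36231102454)*t^6 + (-4518361420)*t^7) * aeval t (derivative F5Z) := by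
        simp [F5Z, map_ofNat]
        linear_combination ((6041061322964) + (6849963310712)*t + (6920780218064)*t^2 + (1009683365048)*t^3 + (872171454976)*t^4 + (253701928272)*t^5 + (36146891360)*t^6) * hf
      rw [this]
      exact Ideal.mul_mem_left _ _ hm
    have hn := norm_dvd_of_mem _ hm2
    rw [← map_natCast (algebraMap ℤ (𝓞 E)), Algebra.norm_algebraMap,
      NumberField.RingOfIntegers.rank, hE] at hn
    rwa [Int.natAbs_pow, Int.natAbs_natCast] at hn
  apply Nat.dvd_antisymm
  · have := Nat.dvd_gcd u1 u2
    refine this.trans (dvd_of_eq ?_)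
    norm_num
  · refine Nat.Coprime.mul_dvd_of_dvd_of_dvd (by norm_num) (Nat.Coprime.mul_dvd_of_dvd_of_dvd (by norm_num) d2 d3) d53

end discE

section relK
open NumberField

lemma val_lemma {E : Type*} [Field E] (v : Valuation E (WithZero (Multiplicative ℤ))) (u w a b : E)
    (ha : v a ≤ WithZero.exp (-2)) (hb : v b = WithZero.exp (-1))
    (hN : v (u ^ 2 + u * w * a + w ^ 2 * b) ≤ 1) : v u ≤ 1 ∧ v w ≤ 1 := by
  by_cases hw : w = 0
  · subst hw
    simp only [mul_zero, zero_mul, add_zero, ne_eq, OfNat.ofNat_ne_zero, not_false_eq_true, zero_pow, map_pow] at hN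
    refine ⟨(pow_le_one_iff (by norm_num)).1 hN, by simp⟩
  have hw' : v w ≠ 0 := (Valuation.ne_zero_iff _).2 hw
  obtain ⟨k, hk⟩ : ∃ k, v w = WithZero.exp k := ⟨_, (WithZero.exp_log hw').symm⟩
  have hwb : v (w ^ 2 * b) = WithZero.exp (2 * k - 1) := by
    rw [map_mul, map_pow, hk, hb, ← WithZero.exp_nsmul, ← WithZero.exp_add]; congr 1
  by_cases hu : u = 0
  · subst hu
    rw [zero_mul, zero_mul, zero_pow (by norm_num), zero_add, zero_add, hwb, ← WithZero.exp_zero, WithZero.exp_le_exp] at hN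
    refine ⟨by simp, ?_⟩
    rw [hk, ← WithZero.exp_zero, WithZero.exp_le_exp]; omega
  have hu' : v u ≠ 0 := (Valuation.ne_zero_iff _).2 hu
  obtain ⟨i, hi⟩ : ∃ k, v u = WithZero.exp k := ⟨_, (WithZero.exp_log hu').symm⟩
  have huu : v (u ^ 2) = WithZero.exp (2 * i) := by
    rw [map_pow, hi, ← WithZero.exp_nsmul]; congr 1
  have hm : v (u * w * a) ≤ WithZero.exp (i + k - 2) := by
    rw [map_mul, map_mul, hi, hk]
    calc _ ≤ WithZero.exp i * WithZero.exp k * WithZero.exp (-2) := by gcongr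
      _ = _ := by rw [← WithZero.exp_add, ← WithZero.exp_add]; rfl
  rw [hi, hk, ← WithZero.exp_zero, WithZero.exp_le_exp, WithZero.exp_le_exp]
  rcases le_or_gt k i with h | h
  · have h1 : v (u * w * a + w ^ 2 * b) < v (u ^ 2) := by
      apply Valuation.map_add_lt
      · rw [huu]; exact hm.trans_lt (WithZero.exp_lt_exp.2 (by omega))
      · rw [huu, hwb]; exact (WithZero.exp_lt_exp.2 (by omega))
    rw [add_assoc, Valuation.map_add_eq_of_lt_left _ h1, huu, ← WithZero.exp_zero, WithZero.exp_le_exp] at hN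
    omega
  · have h1 : v (u ^ 2 + u * w * a) < v (w ^ 2 * b) := by
      apply Valuation.map_add_lt
      · rw [huu, hwb]; exact (WithZero.exp_lt_exp.2 (by omega))
      · rw [hwb]; exact hm.trans_lt (WithZero.exp_lt_exp.2 (by omega))
    rw [Valuation.map_add_eq_of_lt_right _ h1, hwb, ← WithZero.exp_zero, WithZero.exp_le_exp] at hN
    omega

variable {E K : Type*} [Field E] [Field K] [NumberField E] [NumberField K] [Algebra E K]

lemma quad_minpoly (x : K) (a b : E) (h : x ^ 2 - algebraMap E K a * x + algebraMap E K b = 0)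
    (hx : x ∉ (algebraMap E K).range) : minpoly E x = X ^ 2 - C a * X + C b := by
  have hm : (X ^ 2 - C a * X + C b : E[X]).Monic := by monicity!
  have hd : (X ^ 2 - C a * X + C b : E[X]).natDegree = 2 := by compute_degree!
  have hz : aeval x (X ^ 2 - C a * X + C b : E[X]) = 0 := by simpa using h
  have hi : IsIntegral E x := ⟨_, hm, hz⟩
  refine (eq_of_monic_of_dvd_of_natDegree_le (minpoly.monic hi) hm (minpoly.dvd E x hz) ?_).symm
  rw [hd]
  exact (minpoly.two_le_natDegree_iff hi).2 hx

lemma quad_top (hf : Module.finrank E K = 2) (x : K) (hx : x ∉ (algebraMap E K).range) :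
    IntermediateField.adjoin E {x} = ⊤ := by
  have : FiniteDimensional E K := Module.finite_of_finrank_pos (by omega)
  have hi : IsIntegral E x := Algebra.IsIntegral.isIntegral x
  apply IntermediateField.eq_of_le_of_finrank_le le_top
  rw [IntermediateField.finrank_top', hf, IntermediateField.adjoin.finrank hi]
  exact (minpoly.two_le_natDegree_iff hi).2 hx

lemma quad_trace (hf : Module.finrank E K = 2) (x : K) (a b : E) (h : x ^ 2 - algebraMap E K a * x + algebraMap E K b = 0)
    (hx : x ∉ (algebraMap E K).range) : Algebra.trace E K x = a := by
  have hd : (X ^ 2 - C a * X + C b : E[X]).natDegree = 2 := by compute_degree!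
  rw [trace_eq_finrank_mul_minpoly_nextCoeff, quad_top hf x hx, quad_minpoly x a b h hx, IntermediateField.finrank_top,
    nextCoeff_of_natDegree_pos (by omega), hd]
  simp [coeff_X]

lemma quad_int (x : 𝓞 K) (a b : E) (h : (x : K) ^ 2 - algebraMap E K a * x + algebraMap E K b = 0)
    (hx : (x : K) ∉ (algebraMap E K).range) : IsIntegral (𝓞 E) b ∧
      ∀ a' b' : 𝓞 E, algebraMap _ _ a' = a → algebraMap _ _ b' = b → minpoly (𝓞 E) x = X ^ 2 - C a' * X + C b' := by
  have h1 := quad_minpoly (x : K) a b h hx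
  have hxi : IsIntegral (𝓞 E) x := Algebra.IsIntegral.isIntegral x
  have h2 := minpoly.isIntegrallyClosed_eq_field_fractions E K (s := x) hxi
  rw [← RingOfIntegers.coe_eq_algebraMap, h1] at h2
  constructor
  · have : b = algebraMap _ _ ((minpoly (𝓞 E) x).coeff 0) := by
      rw [← coeff_map, ← h2]; simp
    rw [this]; exact isIntegral_algebraMap
  · rintro a' b' rfl rfl
    apply Polynomial.map_injective (algebraMap (𝓞 E) E) RingOfIntegers.coe_injective
    rw [← h2]; simp

lemma quad_diff (hf : Module.finrank E K = 2) (x : 𝓞 K) (a b : 𝓞 E)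
    (h : x ^ 2 - algebraMap (𝓞 E) (𝓞 K) a * x + algebraMap (𝓞 E) (𝓞 K) b = 0)
    (hx : (x : K) ∉ (algebraMap E K).range) : 2 * x - algebraMap (𝓞 E) (𝓞 K) a ∈ differentIdeal (𝓞 E) (𝓞 K) := by
  have h' : (x : K) ^ 2 - algebraMap E K a * x + algebraMap E K b = 0 := by
    have := congrArg (algebraMap (𝓞 K) K) h
    rw [map_add, map_sub, map_mul, map_pow, map_zero, ← IsScalarTower.algebraMap_apply, ← IsScalarTower.algebraMap_apply,
      IsScalarTower.algebraMap_apply (𝓞 E) E K, IsScalarTower.algebraMap_apply (𝓞 E) E K] at this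
    exact this
  have h3 := (quad_int x _ _ h' hx).2 a b rfl rfl
  have htop : Algebra.adjoin E {(x : K)} = ⊤ := by
    have : FiniteDimensional E K := Module.finite_of_finrank_pos (by omega)
    have := congrArg IntermediateField.toSubalgebra (quad_top hf (x : K) hx)
    rwa [IntermediateField.adjoin_simple_toSubalgebra_of_isAlgebraic (Algebra.IsAlgebraic.isAlgebraic _), IntermediateField.top_toSubalgebra] at this
  have := aeval_derivative_mem_differentIdeal (𝓞 E) E K x htop
  rw [h3] at this
  simpa [one_add_one_eq_two, map_ofNat] using this

end relK

section relK2
open NumberField IsDedekindDomain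
variable {E K : Type*} [Field E] [Field K] [NumberField E] [NumberField K] [Algebra E K]

lemma quad_repr (hf : Module.finrank E K = 2) (y : K) (hy : y ∉ (algebraMap E K).range) (x : K) :
    ∃ u w : E, x = algebraMap E K u + algebraMap E K w * y := by
  have hli : LinearIndependent E ![(1 : K), y] := by
    rw [LinearIndependent.pair_iff]
    intro s t h
    rw [Algebra.smul_def, Algebra.smul_def, mul_one] at h
    by_cases ht : t = 0
    · subst ht
      simpa using h
    · exfalso; apply hy
      refine ⟨-s / t, ?_⟩
      have : algebraMap E K t ≠ 0 := by simpa using ht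
      rw [map_div₀, map_neg]
      field_simp
      linear_combination -h
  have := hli.span_eq_top_of_card_eq_finrank' (by simp [hf])
  have hx : x ∈ Submodule.span E (Set.range ![(1 : K), y]) := by rw [this]; trivial
  rw [Matrix.range_cons, Matrix.range_cons, Matrix.range_empty, Set.union_empty, Set.singleton_union,
    Submodule.mem_span_pair] at hx
  obtain ⟨u, w, h⟩ := hx
  exact ⟨u, w, by rw [← h, Algebra.smul_def, Algebra.smul_def, mul_one]⟩

lemma trace_mem (P : HeightOneSpectrum (𝓞 E)) (hf : Module.finrank E K = 2) (y : 𝓞 K) (a b : 𝓞 E)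
    (h : y ^ 2 - algebraMap (𝓞 E) (𝓞 K) a * y + algebraMap (𝓞 E) (𝓞 K) b = 0)
    (hy : (y : K) ∉ (algebraMap E K).range) (h2 : (2 : 𝓞 E) ∈ P.asIdeal ^ 2) (ha : a ∈ P.asIdeal ^ 2)
    (hb : b ∈ P.asIdeal) (hb' : b ∉ P.asIdeal ^ 2) (x : 𝓞 K) :
    ∃ c ∈ P.asIdeal ^ 2, algebraMap (𝓞 E) E c = Algebra.trace E K x := by
  have : FiniteDimensional E K := Module.finite_of_finrank_pos (by omega)
  have h' : (y : K) ^ 2 - algebraMap E K a * y + algebraMap E K b = 0 := by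
    have := congrArg (algebraMap (𝓞 K) K) h
    rw [map_add, map_sub, map_mul, map_pow, map_zero, ← IsScalarTower.algebraMap_apply, ← IsScalarTower.algebraMap_apply,
      IsScalarTower.algebraMap_apply (𝓞 E) E K, IsScalarTower.algebraMap_apply (𝓞 E) E K] at this
    exact this
  have vm : ∀ (n : ℕ) (r : 𝓞 E), P.valuation E (r : E) ≤ WithZero.exp (-(n : ℤ)) ↔ r ∈ P.asIdeal ^ n := by
    intro n r
    rw [HeightOneSpectrum.valuation_of_algebraMap, HeightOneSpectrum.intValuation_le_pow_iff_mem]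
  have va : P.valuation E (a : E) ≤ WithZero.exp (-2) := (vm 2 a).2 ha
  have v2 : P.valuation E ((2 : 𝓞 E) : E) ≤ WithZero.exp (-2) := (vm 2 2).2 h2
  have vb : P.valuation E (b : E) = WithZero.exp (-1) := by
    apply le_antisymm ((vm 1 b).2 (by simpa using hb))
    have := mt (vm 2 b).1 hb'
    rw [not_le] at this
    have hb0 : P.valuation E (b : E) ≠ 0 := (lt_of_le_of_lt zero_le this).ne'
    obtain ⟨k, hk⟩ : ∃ k, P.valuation E (b : E) = WithZero.exp k := ⟨_, (WithZero.exp_log hb0).symm⟩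
    rw [hk, WithZero.exp_lt_exp] at this
    rw [hk, WithZero.exp_le_exp]; push_cast at this; omega
  obtain ⟨u, w, hx⟩ := quad_repr hf (y : K) hy (x : K)
  have htr : Algebra.trace E K x = ((2 : 𝓞 E) : E) * u + w * a := by
    rw [hx, map_add, Algebra.trace_algebraMap, hf, ← Algebra.smul_def, map_smul, quad_trace hf (y : K) _ _ h' hy]
    rw [RingOfIntegers.coe_eq_algebraMap (2 : 𝓞 E), map_ofNat, nsmul_eq_mul, smul_eq_mul]; norm_num
  have hN : P.valuation E (u ^ 2 + u * w * a + w ^ 2 * b) ≤ 1 := by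
    have : IsIntegral (𝓞 E) (u ^ 2 + u * w * a + w ^ 2 * b : E) := by
      by_cases hw : w = 0
      · subst hw
        have : IsIntegral (𝓞 E) u := by
          have h1 : IsIntegral (𝓞 E) (x : K) := isIntegral_trans (R := 𝓞 E) (A := 𝓞 K) (x : K) isIntegral_algebraMap
          rw [hx] at h1
          simp only [map_zero, zero_mul, add_zero] at h1
          exact (isIntegral_algebraMap_iff (algebraMap E K).injective).1 h1
        simpa using this.pow 2
      · refine (quad_int x (2 * u + w * a) _ ?_ ?_).1
        · rw [hx]; simp only [map_add, map_mul, map_pow, map_ofNat]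
          linear_combination (algebraMap E K w) ^ 2 * h'
        · rintro ⟨z, hz⟩
          apply hy
          refine ⟨(z - u) / w, ?_⟩
          have : algebraMap E K w ≠ 0 := by simpa using hw
          rw [map_div₀, map_sub, hz, hx]
          field_simp
          ring
    obtain ⟨r, hr⟩ := IsIntegrallyClosed.isIntegral_iff.1 this
    rw [← hr]; exact P.valuation_le_one r
  obtain ⟨hu, hw⟩ := val_lemma (P.valuation E) u w a b va vb hN
  have hti : IsIntegral (𝓞 E) (Algebra.trace E K x) := by
    apply Algebra.isIntegral_trace
    exact isIntegral_trans (R := 𝓞 E) (A := 𝓞 K) (x : K) isIntegral_algebraMap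
  obtain ⟨c, hc⟩ := IsIntegrallyClosed.isIntegral_iff.1 hti
  refine ⟨c, ?_, hc⟩
  rw [← vm 2 c, RingOfIntegers.coe_eq_algebraMap, hc, htr]
  apply Valuation.map_add_le
  · rw [map_mul]; exact (mul_le_mul' v2 hu).trans (mul_one _).le
  · rw [map_mul]; exact (mul_le_mul' hw va).trans (one_mul _).le

lemma diff_le (I : Ideal (𝓞 E)) (hI : I ≠ ⊥)
    (ht : ∀ x : 𝓞 K, ∃ c ∈ I, algebraMap (𝓞 E) E c = Algebra.trace E K x) :
    differentIdeal (𝓞 E) (𝓞 K) ≤ I.map (algebraMap (𝓞 E) (𝓞 K)) := by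
  have hI' : I.map (algebraMap (𝓞 E) (𝓞 K)) ≠ ⊥ := by
    rwa [Ne, Ideal.map_eq_bot_iff_of_injective (FaithfulSMul.algebraMap_injective _ _)]
  rw [differentialIdeal_le_iff (K := E) (L := K) hI']
  rintro _ ⟨z, hz, rfl⟩
  have hz' : z ∈ ((I.map (algebraMap (𝓞 E) (𝓞 K)) : Ideal (𝓞 K)) : FractionalIdeal (nonZeroDivisors (𝓞 K)) K)⁻¹ := hz
  rw [FractionalIdeal.mem_inv_iff (by simpa using hI')] at hz'
  have key : IsIntegral (𝓞 E) (Algebra.trace E K z) := by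
    refine isIntegral_of_smul_mem_submodule (R := 𝓞 E) (A := E) (M := E) (Submodule.map (Algebra.linearMap (𝓞 E) E) I) ?_ ?_ _ ?_
    · intro h
      obtain ⟨n, hn, hn0⟩ := Submodule.exists_mem_ne_zero_of_ne_bot hI
      have h3 : Algebra.linearMap (𝓞 E) E n ∈ Submodule.map (Algebra.linearMap (𝓞 E) E) I := ⟨n, hn, rfl⟩
      rw [h, Submodule.mem_bot, Algebra.linearMap_apply] at h3
      exact hn0 (RingOfIntegers.coe_injective (by simpa using h3))
    · exact (IsNoetherian.noetherian I).map _
    · rintro _ ⟨n, hn, rfl⟩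
      have h1 := hz' (algebraMap (𝓞 K) K (algebraMap (𝓞 E) (𝓞 K) n)) (FractionalIdeal.mem_coeIdeal_of_mem _ (Ideal.mem_map_of_mem _ hn))
      rw [FractionalIdeal.mem_one_iff] at h1
      obtain ⟨q, hq⟩ := h1
      obtain ⟨c, hc, hc'⟩ := ht q
      refine ⟨c, hc, ?_⟩
      rw [Algebra.linearMap_apply, hc', RingOfIntegers.coe_eq_algebraMap, hq, ← IsScalarTower.algebraMap_apply,
        IsScalarTower.algebraMap_apply (𝓞 E) E K, mul_comm, ← Algebra.smul_def, map_smul, smul_eq_mul, smul_eq_mul, mul_comm]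
      rfl
  obtain ⟨r, hr⟩ := IsIntegrallyClosed.isIntegral_iff.1 key
  exact Submodule.mem_one.2 ⟨r, hr⟩

lemma discr_K (hf : Module.finrank E K = 2) (e t : 𝓞 E) (he : aeval (e : E) h2Q = 0)
    (htop : Algebra.adjoin ℚ {(e : E)} = ⊤) (ht : aeval (t : E) f5 = 0)
    (httop : Algebra.adjoin ℚ {(t : E)} = ⊤)
    (γ : 𝓞 K) (τ : 𝓞 E) (hγ : γ ^ 2 = algebraMap (𝓞 E) (𝓞 K) τ) (hτ : τ ∣ 3)
    (hγE : (γ : K) ∉ (algebraMap E K).range)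
    (w : E) (M a b : 𝓞 E) (hw : w ^ 2 * (τ : E) = (M : E)) (hM : a ^ 2 - 4 * b = M)
    (u1 v1 u2 v2 u3 v3 u4 v4 x4 u5 v5 : 𝓞 E)
    (h1 : 2 = u1 * M + 6 * v1) (h2 : (1 + e) ^ 2 = u2 * a + 2 * v2)
    (h3 : b = u3 * (1 + e) + 2 * v3) (h4 : 1 + e = u4 * b + 2 * v4 + (1 + e) ^ 2 * x4)
    (h5 : a = u5 * (1 + e) ^ 2 + 2 * v5) :
    (NumberField.discr K).natAbs = 2 ^ 16 * 3 ^ 8 * 53 ^ 8 := by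
  have : FiniteDimensional E K := Module.finite_of_finrank_pos (by omega)
  obtain ⟨hN, h27, -⟩ := two_cert e he htop
  have hD := discr_E e t he htop ht httop
  have hPp : (J2 e).IsPrime := Ideal.isPrime_of_irreducible_absNorm (by rw [hN]; exact Nat.prime_two)
  have hPb : J2 e ≠ ⊥ := by
    intro h; rw [h] at hN; simp at hN
  let P : HeightOneSpectrum (𝓞 E) := ⟨J2 e, hPp, hPb⟩
  have m1 : (1 + e) ∈ J2 e := Ideal.subset_span (by simp)
  have m11 : (1 + e) ^ 2 ∈ J2 e ^ 2 := Ideal.pow_mem_pow m1 2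
  have m22 : (2 : 𝓞 E) ∈ J2 e ^ 2 := Ideal.pow_le_pow_right (by norm_num) h27
  have m2 : (2 : 𝓞 E) ∈ J2 e := Ideal.pow_le_self (by norm_num) h27
  have ma : a ∈ J2 e ^ 2 := by
    rw [h5]; exact Ideal.add_mem _ (Ideal.mul_mem_left _ _ m11) (Ideal.mul_mem_right _ _ m22)
  have mb : b ∈ J2 e := by
    rw [h3]; exact Ideal.add_mem _ (Ideal.mul_mem_left _ _ m1) (Ideal.mul_mem_right _ _ m2)
  have mb' : b ∉ J2 e ^ 2 := by
    intro hb
    have : 1 + e ∈ J2 e ^ 2 := by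
      rw [h4]; exact Ideal.add_mem _ (Ideal.add_mem _ (Ideal.mul_mem_left _ _ hb) (Ideal.mul_mem_right _ _ m22))
        (Ideal.mul_mem_right _ _ m11)
    have hle : J2 e ≤ J2 e ^ 2 := by
      conv_lhs => rw [J2]
      rw [Ideal.span_le]
      rintro x (rfl | rfl)
      · simpa using m22
      · exact this
    have := Ideal.absNorm_dvd_absNorm_of_le hle
    rw [map_pow, hN] at this
    norm_num at this
  -- the generator y
  have hwK : (algebraMap E K w * (γ : K)) ^ 2 = algebraMap E K (M : E) := by
    have h := congrArg (algebraMap (𝓞 K) K) hγ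
    rw [map_pow, ← IsScalarTower.algebraMap_apply, IsScalarTower.algebraMap_apply (𝓞 E) E K] at h
    rw [← hw, map_mul, map_pow, mul_pow, RingOfIntegers.coe_eq_algebraMap, h]
  have hMK : (algebraMap E K (M : E)) = algebraMap E K (a : E) ^ 2 - 4 * algebraMap E K (b : E) := by
    rw [← hM]; simp [map_ofNat]
  obtain ⟨Y, hY⟩ : ∃ Y : K, Y = (algebraMap E K (a : E) + algebraMap E K w * (γ : K)) / 2 := ⟨_, rfl⟩
  have hYr : Y ^ 2 - algebraMap E K (a : E) * Y + algebraMap E K (b : E) = 0 := by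
    rw [hMK] at hwK
    rw [hY]; linear_combination hwK / 4
  have hYi : IsIntegral (𝓞 E) Y := by
    refine ⟨X ^ 2 - C a * X + C b, by monicity!, ?_⟩
    simpa [IsScalarTower.algebraMap_apply (𝓞 E) E K] using hYr
  have hYz : IsIntegral ℤ Y := isIntegral_trans (A := 𝓞 E) Y hYi
  obtain ⟨y, rfl⟩ : ∃ y : 𝓞 K, (y : K) = Y := ⟨⟨Y, hYz⟩, rfl⟩
  have hyr : y ^ 2 - algebraMap (𝓞 E) (𝓞 K) a * y + algebraMap (𝓞 E) (𝓞 K) b = 0 := by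
    apply RingOfIntegers.coe_injective
    rw [RingOfIntegers.coe_eq_algebraMap] at hYr
    rw [map_add, map_sub, map_mul, map_pow, map_zero, ← IsScalarTower.algebraMap_apply, ← IsScalarTower.algebraMap_apply,
      IsScalarTower.algebraMap_apply (𝓞 E) E K, IsScalarTower.algebraMap_apply (𝓞 E) E K]
    exact hYr
  have hw0 : w ≠ 0 := by
    rintro rfl
    have hM0 : M = 0 := RingOfIntegers.coe_injective (by simpa using hw.symm)
    rw [hM0] at h1
    have h31 : (3 : 𝓞 E) * v1 = 1 := by
      apply mul_left_cancel₀ (two_ne_zero (α := 𝓞 E))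
      linear_combination -h1
    have hu : IsUnit (Algebra.norm ℤ (algebraMap ℤ (𝓞 E) 3)) :=
      (IsUnit.of_mul_eq_one _ (by rw [map_ofNat]; exact h31)).map (Algebra.norm ℤ)
    rw [Algebra.norm_algebraMap, NumberField.RingOfIntegers.rank, finrank_E (e : E) he htop, Int.isUnit_iff] at hu
    norm_num at hu
  have hyE : (y : K) ∉ (algebraMap E K).range := by
    rintro ⟨z, hz⟩
    apply hγE
    refine ⟨(2 * z - a) / w, ?_⟩
    have : algebraMap E K w ≠ 0 := by simpa using hw0
    rw [map_div₀, map_sub, map_mul, hz, hY, map_ofNat]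
    field_simp
    ring
  -- upper bound on the ideal
  have le1 := diff_le (K := K) (J2 e ^ 2) (pow_ne_zero _ hPb) (trace_mem P hf y a b hyr hyE m22 ma mb mb')
  have d1 := quad_diff hf y a b hyr hyE
  have d0 := quad_diff hf γ 0 (-τ) (by rw [hγ]; simp) hγE
  have d6 : (6 : 𝓞 K) ∈ differentIdeal (𝓞 E) (𝓞 K) := by
    obtain ⟨k, hk⟩ := hτ
    have hk' := congrArg (algebraMap (𝓞 E) (𝓞 K)) hk
    rw [map_mul, map_ofNat, ← hγ] at hk'
    have : (6 : 𝓞 K) = (2 * γ - algebraMap (𝓞 E) (𝓞 K) 0) * (γ * algebraMap (𝓞 E) (𝓞 K) k) := by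
      rw [map_zero]; linear_combination 2 * hk'
    rw [this]; exact Ideal.mul_mem_right _ _ d0
  have dM : algebraMap (𝓞 E) (𝓞 K) M ∈ differentIdeal (𝓞 E) (𝓞 K) := by
    have : algebraMap (𝓞 E) (𝓞 K) M = (2 * y - algebraMap (𝓞 E) (𝓞 K) a) * (2 * y - algebraMap (𝓞 E) (𝓞 K) a) := by
      rw [← hM, map_sub, map_mul, map_pow, map_ofNat]; linear_combination -4 * hyr
    rw [this]; exact Ideal.mul_mem_right _ _ d1
  have d2 : (2 : 𝓞 K) ∈ differentIdeal (𝓞 E) (𝓞 K) := by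
    have := congrArg (algebraMap (𝓞 E) (𝓞 K)) h1
    rw [map_add, map_mul, map_mul, map_ofNat, map_ofNat] at this
    rw [this]
    exact Ideal.add_mem _ (Ideal.mul_mem_left _ _ dM) (Ideal.mul_mem_right _ _ d6)
  have da : algebraMap (𝓞 E) (𝓞 K) a ∈ differentIdeal (𝓞 E) (𝓞 K) := by
    have : algebraMap (𝓞 E) (𝓞 K) a = 2 * y - (2 * y - algebraMap (𝓞 E) (𝓞 K) a) := by ring
    rw [this]
    exact Ideal.sub_mem _ (Ideal.mul_mem_right _ _ d2) d1
  have de : algebraMap (𝓞 E) (𝓞 K) ((1 + e) ^ 2) ∈ differentIdeal (𝓞 E) (𝓞 K) := by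
    rw [h2, map_add, map_mul, map_mul, map_ofNat]
    exact Ideal.add_mem _ (Ideal.mul_mem_left _ _ da) (Ideal.mul_mem_right _ _ d2)
  have le2 : (J2 e ^ 2).map (algebraMap (𝓞 E) (𝓞 K)) ≤ differentIdeal (𝓞 E) (𝓞 K) := by
    rw [Ideal.map_le_iff_le_comap]
    refine (span_pair_pow_le _ _ _).trans ?_
    rw [Ideal.span_le]
    rintro x (rfl | rfl)
    · simpa [map_ofNat] using d2
    · exact de
  rw [natAbs_discr_eq_absNorm_differentIdeal_mul_natAbs_discr_pow E (𝓞 E) K (𝓞 K), le_antisymm le1 le2,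
    Ideal.absNorm_algebraMap, hD, map_pow, hN, ← IsFractionRing.finrank_eq (𝓞 E) E (𝓞 K) K, hf]
  norm_num

end relK2

section relK3
open NumberField
variable {E K : Type*} [Field E] [Field K] [NumberField E] [NumberField K] [Algebra E K]

lemma t_unit (t : 𝓞 E) (ht : aeval (t : E) f5 = 0) : t ∣ 1 := by
  refine ⟨-(t^7+8*t^6+32*t^5+44*t^4+382*t^3+496*t^2+656*t-20), ?_⟩
  have : t^8+8*t^7+32*t^6+44*t^5+382*t^4+496*t^3+656*t^2-20*t+1 = 0 := by
    rw [aeval_f5] at ht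
    apply NumberField.RingOfIntegers.coe_injective
    simpa [map_ofNat] using ht
  linear_combination this

lemma discr_Ka (hf : Module.finrank E K = 2) (e t : 𝓞 E) (he : aeval (e : E) h2Q = 0)
    (htop : Algebra.adjoin ℚ {(e : E)} = ⊤) (ht : aeval (t : E) f5 = 0)
    (httop : Algebra.adjoin ℚ {(t : E)} = ⊤) (hth : thF (e : E) = (t : E))
    (γ : 𝓞 K) (hγ : γ ^ 2 = algebraMap (𝓞 E) (𝓞 K) t)
    (hγE : (γ : K) ∉ (algebraMap E K).range) :
    (NumberField.discr K).natAbs = 2 ^ 16 * 3 ^ 8 * 53 ^ 8 := by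
  have h := e_rel e he
  have h' := he
  rw [aeval_h2Q] at h'
  obtain ⟨k, hk⟩ := t_unit t ht
  refine discr_K hf e t he htop ht httop γ t hγ ⟨3 * k, by linear_combination 3 * hk⟩ hγE
    (waF (e : E)) ((37) + (10)*e + (32)*e^2 + (4)*e^3 + (17)*e^4 + (2)*e^5 + (2)*e^6) ((1) + (1)*e + (1)*e^2 + (-1)*e^3 + (-2)*e^4 + (1)*e^5 + (1)*e^7) ((-297) + (312)*e + (-1118)*e^2 + (546)*e^3 + (3)*e^4 + (-155)*e^5 + (11)*e^6 + (88)*e^7) ?_ ?_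
    ((2) + (2)*e^3 + (2)*e^5) ((-156) + (93)*e + (-558)*e^2 + (59)*e^3 + (-95)*e^4 + (-101)*e^5 + (-22)*e^6 + (-17)*e^7)
    ((1) + (1)*e + (1)*e^5) ((32) + (50)*e + (111)*e^2 + (216)*e^3 + (138)*e^4 + (-8)*e^5 + (72)*e^6 + (38)*e^7)
    ((1) + (1)*e + (1)*e^2 + (1)*e^3 + (1)*e^5) ((-149) + (155)*e + (-560)*e^2 + (272)*e^3 + (1)*e^4 + (-78)*e^5 + (5)*e^6 + (44)*e^7)
    ((1) + (1)*e^5 + (1)*e^6) ((-96371) + (34078)*e + (-335631)*e^2 + (-75003)*e^3 + (-7763)*e^4 + (-76757)*e^5 + (-41295)*e^6 + (-292)*e^7) (0)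
    ((1) + (1)*e + (1)*e^5) ((-1)*e + (-1)*e^2 + (-1)*e^3 + (-1)*e^4 + (-1)*e^6) ?_ ?_ ?_ ?_ ?_
  · have := waF_sq (e : E) h'
    rw [hth] at this
    simpa [map_ofNat] using this
  · linear_combination ((72) + (-65)*e + (9)*e^2 + (2)*e^3 + (2)*e^4 + (-3)*e^5 + (1)*e^6) * h
  · linear_combination (-((-54) + (26)*e + (-8)*e^2 + (4)*e^3)) * h
  · linear_combination (-((4) + (7)*e + (1)*e^2 + (-3)*e^3 + (1)*e^4)) * h
  · linear_combination (-(0)) * h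
  · linear_combination (-((-12065) + (2017)*e + (1336)*e^2 + (-441)*e^3 + (-165)*e^4 + (88)*e^5)) * h
  · linear_combination (-(0)) * h

lemma discr_Kb (hf : Module.finrank E K = 2) (e t : 𝓞 E) (he : aeval (e : E) h2Q = 0)
    (htop : Algebra.adjoin ℚ {(e : E)} = ⊤) (ht : aeval (t : E) f5 = 0)
    (httop : Algebra.adjoin ℚ {(t : E)} = ⊤) (hth : thF (e : E) = (t : E))
    (γ : 𝓞 K) (hγ : γ ^ 2 = algebraMap (𝓞 E) (𝓞 K) (-3 * t))
    (hγE : (γ : K) ∉ (algebraMap E K).range) :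
    (NumberField.discr K).natAbs = 2 ^ 16 * 3 ^ 8 * 53 ^ 8 := by
  have h := e_rel e he
  have h' := he
  rw [aeval_h2Q] at h'
  obtain ⟨k, hk⟩ := t_unit t ht
  refine discr_K hf e t he htop ht httop γ (-3 * t) hγ ⟨-k, by linear_combination 3 * hk⟩ hγE
    (wbF (e : E)) ((1) + (4)*e + (6)*e^2 + (8)*e^3 + (1)*e^4) ((1) + (1)*e^2) ((-1)*e + (-1)*e^2 + (-2)*e^3) ?_ ?_
    ((2) + (2)*e^3 + (2)*e^4 + (2)*e^5) ((32) + (-2)*e + (111)*e^2 + (58)*e^3 + (27)*e^4 + (30)*e^5 + (17)*e^6 + (4)*e^7)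
    ((1)) ((1)*e)
    ((1)*e) ((-1)*e + (-1)*e^2 + (-1)*e^3)
    ((1)) ((1)*e^3) ((1))
    ((1)) ((-1)*e) ?_ ?_ ?_ ?_ ?_
  · have := wbF_sq (e : E) h'
    rw [hth] at this
    simpa [map_ofNat] using this
  · linear_combination (0) * h
  · linear_combination (-((12) + (2)*e)) * h
  · linear_combination (-(0)) * h
  · linear_combination (-(0)) * h
  · linear_combination (-(0)) * h
  · linear_combination (-(0)) * h

lemma adj_inst {E : Type*} [Field E] (i1 i2 : Algebra ℚ E) (x : E)
    (h : @Algebra.adjoin ℚ E _ _ i1 {x} = ⊤) : @Algebra.adjoin ℚ E _ _ i2 {x} = ⊤ := by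
  have : i1 = i2 := Subsingleton.elim _ _
  subst this
  exact h

lemma setup {K : Type*} [Field K] [NumberField K] (θ : K) (hθ : aeval θ f5 = 0) :
    ∃ e t : 𝓞 ℚ⟮θ⟯, aeval (e : ℚ⟮θ⟯) h2Q = 0 ∧ Algebra.adjoin ℚ {(e : ℚ⟮θ⟯)} = ⊤ ∧
      aeval (t : ℚ⟮θ⟯) f5 = 0 ∧ Algebra.adjoin ℚ {(t : ℚ⟮θ⟯)} = ⊤ ∧ thF (e : ℚ⟮θ⟯) = (t : ℚ⟮θ⟯) ∧
      ((t : ℚ⟮θ⟯) : K) = θ := by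
  have hi : IsIntegral ℚ θ := ⟨f5, f5_monic, hθ⟩
  have hT : aeval (AdjoinSimple.gen ℚ θ) f5 = 0 := by
    apply (algebraMap ℚ⟮θ⟯ K).injective
    rw [map_zero, ← aeval_algebraMap_apply, AdjoinSimple.algebraMap_gen, hθ]
  have hTi : IsIntegral ℤ (AdjoinSimple.gen ℚ θ) := by
    refine ⟨F5Z, by unfold F5Z; monicity!, ?_⟩
    rw [aeval_f5] at hT
    simpa [F5Z, map_ofNat] using hT
  obtain ⟨h1, h2⟩ := f5_root _ hT
  have hEi : IsIntegral ℤ (etF (AdjoinSimple.gen ℚ θ)) := by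
    refine ⟨H2, H2_monic, ?_⟩
    rw [aeval_h2Q] at h1
    simpa [H2, map_ofNat] using h1
  have tt : Algebra.adjoin ℚ {AdjoinSimple.gen ℚ θ} = ⊤ := by
    have := (IntermediateField.adjoin.powerBasis hi).adjoin_gen_eq_top
    rw [IntermediateField.adjoin.powerBasis_gen] at this
    exact adj_inst _ _ _ this
  have te : Algebra.adjoin ℚ {etF (AdjoinSimple.gen ℚ θ)} = ⊤ := by
    rw [eq_top_iff, ← tt]
    apply Algebra.adjoin_le
    rintro _ rfl
    rw [SetLike.mem_coe]
    have h3 : aeval (etF (AdjoinSimple.gen ℚ θ)) thP ∈ Algebra.adjoin ℚ {etF (AdjoinSimple.gen ℚ θ)} :=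
      aeval_mem_adjoin_singleton _ _
    rwa [aeval_thP, h2] at h3
  exact ⟨⟨_, hEi⟩, ⟨_, hTi⟩, h1, te, hT, tt, h2, rfl⟩

lemma finrank_two {K : Type*} [Field K] [NumberField K] (F : IntermediateField ℚ K) (γ : K) (τ : F)
    (h : γ ^ 2 = algebraMap F K τ) (hγ : γ ∉ (algebraMap F K).range) (htop : ℚ⟮γ⟯ = ⊤) :
    Module.finrank F K = 2 := by
  have h1 := quad_minpoly γ (0 : F) (-τ) (by rw [h]; simp) hγ
  have h2 : IntermediateField.adjoin F {γ} = ⊤ := by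
    apply IntermediateField.restrictScalars_injective ℚ
    rw [IntermediateField.restrictScalars_top, eq_top_iff, ← htop, IntermediateField.adjoin_simple_le_iff]
    exact IntermediateField.mem_adjoin_simple_self F γ
  rw [← IntermediateField.finrank_top', ← h2, IntermediateField.adjoin.finrank (Algebra.IsIntegral.isIntegral γ), h1]
  compute_degree!

lemma final_a {K : Type*} [Field K] [NumberField K] (α : K) (hα : aeval (α ^ 2) f5 = 0) (htop : ℚ⟮α⟯ = ⊤)
    (hn : α ∉ ℚ⟮α ^ 2⟯) : (NumberField.discr K).natAbs = 2 ^ 16 * 3 ^ 8 * 53 ^ 8 := by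
  obtain ⟨e, t, he, htope, ht, htopt, hth, htK⟩ := setup (α ^ 2) hα
  have hn' : α ∉ (algebraMap ℚ⟮α ^ 2⟯ K).range := by
    rintro ⟨z, hz⟩
    apply hn
    have h0 : (z : K) ∈ ℚ⟮α ^ 2⟯ := z.2
    have h1 : (z : K) = α := hz
    rwa [h1] at h0
  have hi : IsIntegral ℤ α := by
    have : IsIntegral ℤ (α ^ 2) := by
      rw [← htK]; exact (t.2 : IsIntegral ℤ _).map (IsScalarTower.toAlgHom ℤ ℚ⟮α ^ 2⟯ K)
    exact this.of_pow (by norm_num)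
  obtain ⟨γ, hγ⟩ : ∃ γ : 𝓞 K, algebraMap (𝓞 K) K γ = α := ⟨⟨α, hi⟩, rfl⟩
  refine discr_Ka (finrank_two _ α (t : ℚ⟮α ^ 2⟯) htK.symm hn' htop) e t he htope ht htopt hth γ ?_ (by
    rw [RingOfIntegers.coe_eq_algebraMap, hγ]; exact hn')
  apply RingOfIntegers.coe_injective
  rw [← IsScalarTower.algebraMap_apply, IsScalarTower.algebraMap_apply (𝓞 ℚ⟮α ^ 2⟯) ℚ⟮α ^ 2⟯ K, map_pow, hγ]
  exact htK.symm

lemma final_b {K : Type*} [Field K] [NumberField K] (β : K) (hβ : aeval (-3 * β ^ 2) f5 = 0) (htop : ℚ⟮β⟯ = ⊤)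
    (hn : β ∉ ℚ⟮-3 * β ^ 2⟯) : (NumberField.discr K).natAbs = 2 ^ 16 * 3 ^ 8 * 53 ^ 8 := by
  obtain ⟨e, t, he, htope, ht, htopt, hth, htK⟩ := setup (-3 * β ^ 2) hβ
  have hn' : 3 * β ∉ (algebraMap ℚ⟮-3 * β ^ 2⟯ K).range := by
    rintro ⟨z, hz⟩
    apply hn
    have h0 : ((z / 3 : ℚ⟮-3 * β ^ 2⟯) : K) ∈ ℚ⟮-3 * β ^ 2⟯ := (z / 3 : ℚ⟮-3 * β ^ 2⟯).2
    have h1 : ((z / 3 : ℚ⟮-3 * β ^ 2⟯) : K) = β := by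
      have : algebraMap ℚ⟮-3 * β ^ 2⟯ K (z / 3) = β := by
        rw [map_div₀, hz, map_ofNat]; field_simp
      exact this
    rwa [h1] at h0
  have h9 : (3 * β) ^ 2 = algebraMap ℚ⟮-3 * β ^ 2⟯ K (-3 * (t : ℚ⟮-3 * β ^ 2⟯)) := by
    have : algebraMap ℚ⟮-3 * β ^ 2⟯ K (t : ℚ⟮-3 * β ^ 2⟯) = -3 * β ^ 2 := htK
    rw [map_mul, this, map_neg, map_ofNat]; ring
  have hi : IsIntegral ℤ (3 * β) := by
    have : IsIntegral ℤ ((3 * β) ^ 2) := by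
      rw [h9]
      have h3 : IsIntegral ℤ (-3 * (t : ℚ⟮-3 * β ^ 2⟯)) := (-3 * t).2
      exact h3.map (IsScalarTower.toAlgHom ℤ ℚ⟮-3 * β ^ 2⟯ K)
    exact this.of_pow (by norm_num)
  have htop' : ℚ⟮3 * β⟯ = ⊤ := by
    rw [eq_top_iff, ← htop, IntermediateField.adjoin_simple_le_iff]
    have : β = (3 * β) / 3 := by field_simp
    rw [this]
    exact div_mem (by simpa [← this] using IntermediateField.mem_adjoin_simple_self ℚ (3 * β)) (ofNat_mem _ 3)
  obtain ⟨γ, hγ⟩ : ∃ γ : 𝓞 K, algebraMap (𝓞 K) K γ = 3 * β := ⟨⟨3 * β, hi⟩, rfl⟩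
  refine discr_Kb (finrank_two _ (3 * β) (-3 * (t : ℚ⟮-3 * β ^ 2⟯)) h9 hn' htop') e t he htope ht htopt hth γ ?_ (by
    rw [RingOfIntegers.coe_eq_algebraMap, hγ]; exact hn')
  apply RingOfIntegers.coe_injective
  rw [← IsScalarTower.algebraMap_apply, IsScalarTower.algebraMap_apply (𝓞 ℚ⟮-3 * β ^ 2⟯) ℚ⟮-3 * β ^ 2⟯ K, map_pow, hγ, h9]
  simp [map_ofNat]

end relK3

section padic

def fx {R : Type*} [CommRing R] (y : R) : R :=
  y^8+8*y^7+32*y^6+44*y^5+382*y^4+496*y^3+656*y^2-20*y+1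

lemma fx_map {R S : Type*} [CommRing R] [CommRing S] (φ : R →+* S) (y : R) : φ (fx y) = fx (φ y) := by
  simp [fx, map_ofNat]

lemma aeval_fx {L : Type*} [Field L] [Algebra ℚ L] (x : L) : aeval x f5 = fx x := aeval_f5 x

lemma hensel_int (p : ℕ) [Fact p.Prime] (F : ℤ[X]) (a : ℤ) (h : (p : ℤ) ∣ F.eval a)
    (h' : ¬ (p : ℤ) ∣ F.derivative.eval a) : ∃ z : ℤ_[p], aeval z F = 0 := by
  have e1 : ∀ G : ℤ[X], aeval (a : ℤ_[p]) G = ((G.eval a : ℤ) : ℤ_[p]) := by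
    intro G
    have := aeval_algebraMap_apply ℤ_[p] a G
    simpa using this
  have h1 : ‖aeval (a : ℤ_[p]) F.derivative‖ = 1 := by
    rw [e1]
    refine le_antisymm (PadicInt.norm_le_one _) (not_lt.1 ?_)
    rwa [PadicInt.norm_int_lt_one_iff_dvd]
  have h2 : ‖aeval (a : ℤ_[p]) F‖ < ‖aeval (a : ℤ_[p]) F.derivative‖ ^ 2 := by
    rw [h1, one_pow, e1, PadicInt.norm_int_lt_one_iff_dvd]; exact h
  obtain ⟨z, hz, -⟩ := hensels_lemma h2
  exact ⟨z, hz⟩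

lemma noroot (p : ℕ) [Fact p.Prime] (m : ℤ) (hm : ¬ (p : ℤ) ∣ m) (h : ∀ y : ZMod p, fx ((m : ZMod p) * y ^ 2) ≠ 0)
    (x : ℚ_[p]) : fx ((m : ℚ_[p]) * x ^ 2) ≠ 0 := by
  intro hx
  have hm1 : ‖(m : ℚ_[p])‖ = 1 := by
    have : ‖(m : ℤ_[p])‖ = 1 := by
      refine le_antisymm (PadicInt.norm_le_one _) (not_lt.1 ?_)
      rwa [PadicInt.norm_int_lt_one_iff_dvd]
    rw [PadicInt.norm_def] at this
    simpa using this
  have hi : IsIntegral ℤ_[p] ((m : ℚ_[p]) * x ^ 2) := by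
    refine ⟨F5Z.map (algebraMap ℤ ℤ_[p]), (by unfold F5Z; monicity! : F5Z.Monic).map _, ?_⟩
    rw [eval₂_map]
    simpa [F5Z, fx, map_ofNat] using hx
  obtain ⟨y, hy⟩ := IsIntegrallyClosed.isIntegral_iff.1 hi
  have hn : ‖(m : ℚ_[p]) * x ^ 2‖ ≤ 1 := by rw [← hy]; exact y.2
  rw [norm_mul, hm1, one_mul, norm_pow] at hn
  have hx1 : ‖x‖ ≤ 1 := (pow_le_one_iff_of_nonneg (norm_nonneg _) (by norm_num)).1 hn
  obtain ⟨z, rfl⟩ : ∃ z : ℤ_[p], (z : ℚ_[p]) = x := ⟨⟨x, hx1⟩, rfl⟩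
  have hz : fx ((m : ℤ_[p]) * z ^ 2) = 0 := by
    apply Subtype.coe_injective
    have := fx_map (PadicInt.Coe.ringHom (p := p)) ((m : ℤ_[p]) * z ^ 2)
    have h3 : PadicInt.Coe.ringHom (p := p) ((m : ℤ_[p]) * z ^ 2) = (m : ℚ_[p]) * (z : ℚ_[p]) ^ 2 := by
      rw [map_mul, map_pow, map_intCast]; rfl
    rw [h3, hx] at this
    exact this
  apply h (PadicInt.toZMod z)
  have := fx_map (PadicInt.toZMod (p := p)) ((m : ℤ_[p]) * z ^ 2)
  rw [hz, map_zero, map_mul, map_pow, map_intCast] at this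
  exact this.symm

lemma hasroot (p : ℕ) [Fact p.Prime] (m a : ℤ) (h : (p : ℤ) ∣ (F5Z.comp (C m * X ^ 2)).eval a)
    (h' : ¬ (p : ℤ) ∣ (F5Z.comp (C m * X ^ 2)).derivative.eval a) : ∃ x : ℚ_[p], fx ((m : ℚ_[p]) * x ^ 2) = 0 := by
  obtain ⟨z, hz⟩ := hensel_int p _ a h h'
  refine ⟨z, ?_⟩
  have h1 : aeval z (F5Z.comp (C m * X ^ 2)) = fx ((m : ℤ_[p]) * z ^ 2) := by
    simp [F5Z, fx, aeval_comp, map_ofNat]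
  rw [h1] at hz
  have := fx_map (PadicInt.Coe.ringHom (p := p)) ((m : ℤ_[p]) * z ^ 2)
  rw [hz, map_zero, map_mul, map_pow, map_intCast] at this
  exact this.symm

instance fact5 : Fact (Nat.Prime 5) := ⟨by norm_num⟩
instance fact11 : Fact (Nat.Prime 11) := ⟨by norm_num⟩

lemma rootA5 : ∃ x : ℚ_[5], fx (x ^ 2) = 0 := by
  have := hasroot 5 1 1 (by simp [F5Z]) (by rw [derivative_comp]; simp [F5Z, derivative_pow])
  simpa using this

lemma rootB11 : ∃ x : ℚ_[11], fx (-3 * x ^ 2) = 0 := by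
  have := hasroot 11 (-3) 3 (by simp [F5Z]) (by rw [derivative_comp]; simp [F5Z, derivative_pow])
  simpa using this

lemma norootA11 (x : ℚ_[11]) : fx (x ^ 2) ≠ 0 := by
  have := noroot 11 1 (by norm_num) (by unfold fx; decide +kernel) x
  simpa using this

lemma norootB5 (x : ℚ_[5]) : fx (-3 * x ^ 2) ≠ 0 := by
  have := noroot 5 (-3) (by norm_num) (by unfold fx; decide +kernel) x
  simpa using this

end padic

section assembly

lemma aeval_ga {L : Type*} [Field L] [Algebra ℚ L] (x : L) : aeval x g5a = fx (x ^ 2) := by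
  rw [g5a, aeval_comp, aeval_fx]; simp

lemma aeval_gb {L : Type*} [Field L] [Algebra ℚ L] (x : L) : aeval x g5b = fx (-3 * x ^ 2) := by
  rw [g5b, aeval_comp, aeval_fx]; simp [map_ofNat]

lemma lift_root0 {F K L : Type*} [Field F] [Field K] [Field L] [Algebra F K] [Algebra F L] (p : F[X])
    (hp : Irreducible p) (θ : K) (hθ : aeval θ p = 0) (r : L) (hr : aeval r p = 0) : Nonempty (F⟮θ⟯ →+* L) := by
  have hm := minpoly.eq_of_irreducible hp hθ
  have hi : IsIntegral F θ := IsAlgebraic.isIntegral ⟨p, hp.ne_zero, hθ⟩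
  refine ⟨((IntermediateField.adjoin.powerBasis hi).lift r ?_).toRingHom⟩
  rw [IntermediateField.adjoin.powerBasis_gen, IntermediateField.minpoly_gen, ← hm, map_mul, hr, zero_mul]

lemma lift_root {K L : Type*} [Field K] [Field L] [Algebra ℚ K] [Algebra ℚ L] (p : ℚ[X]) (hp : Irreducible p)
    (θ : K) (hθ : aeval θ p = 0) (r : L) (hr : aeval r p = 0) : Nonempty (ℚ⟮θ⟯ →+* L) :=
  lift_root0 p hp θ hθ r hr

lemma notin_a {K : Type*} [Field K] [Algebra ℚ K] (α : K) (h : fx (α ^ 2) = 0) : α ∉ ℚ⟮α ^ 2⟯ := by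
  intro hα
  obtain ⟨r, hr⟩ := rootB11
  obtain ⟨φ⟩ := lift_root f5 f5_transfer.1 (α ^ 2) (by rw [aeval_fx, h]) (-3 * r ^ 2) (by rw [aeval_fx, hr])
  apply norootA11 (φ ⟨α, hα⟩)
  rw [← map_pow]
  have : fx ((⟨α, hα⟩ : ℚ⟮α ^ 2⟯) ^ 2) = 0 := by
    apply (algebraMap ℚ⟮α ^ 2⟯ K).injective
    rw [fx_map, map_zero, map_pow]; exact h
  rw [← fx_map, this, map_zero]

lemma notin_b {K : Type*} [Field K] [Algebra ℚ K] (β : K) (h : fx (-3 * β ^ 2) = 0) : β ∉ ℚ⟮-3 * β ^ 2⟯ := by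
  intro hβ
  obtain ⟨r, hr⟩ := rootA5
  obtain ⟨φ⟩ := lift_root f5 f5_transfer.1 (-3 * β ^ 2) (by rw [aeval_fx, h]) (r ^ 2) (by rw [aeval_fx, hr])
  apply norootB5 (φ ⟨β, hβ⟩)
  have : fx (-3 * (⟨β, hβ⟩ : ℚ⟮-3 * β ^ 2⟯) ^ 2) = 0 := by
    apply (algebraMap ℚ⟮-3 * β ^ 2⟯ K).injective
    rw [fx_map, map_zero, map_mul, map_pow, map_neg, map_ofNat]; exact h
  have h2 := fx_map φ (-3 * (⟨β, hβ⟩ : ℚ⟮-3 * β ^ 2⟯) ^ 2)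
  rw [this, map_zero, map_mul, map_pow, map_neg, map_ofNat] at h2
  exact h2.symm

lemma finrank_f {K : Type*} [Field K] [Algebra ℚ K] (θ : K) (h : fx θ = 0) : Module.finrank ℚ ℚ⟮θ⟯ = 8 := by
  have h' : aeval θ f5 = 0 := by rw [aeval_fx, h]
  rw [IntermediateField.adjoin.finrank ⟨f5, f5_monic, h'⟩, ← minpoly.eq_of_irreducible_of_monic f5_transfer.1 h' f5_monic,
    f5_natDegree]

lemma deg16 {K : Type*} [Field K] [NumberField K] (θ α : K) (hθ : fx θ = 0) (hα : α ^ 2 ∈ ℚ⟮θ⟯)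
    (hn : α ∉ ℚ⟮θ⟯) (htop : ℚ⟮α⟯ = ⊤) : Module.finrank ℚ K = 16 := by
  have h2 := finrank_two ℚ⟮θ⟯ α ⟨α ^ 2, hα⟩ rfl (by rintro ⟨z, rfl⟩; exact hn z.2) htop
  rw [← Module.finrank_mul_finrank ℚ ℚ⟮θ⟯ K, h2]
  have := finrank_f θ hθ
  omega

lemma main_a {K : Type*} [Field K] [NumberField K] [i : Algebra ℚ K] (α : K) (h : fx (α ^ 2) = 0) (htop : ℚ⟮α⟯ = ⊤) :
    Module.finrank ℚ K = 16 ∧ (NumberField.discr K).natAbs = 2 ^ 16 * 3 ^ 8 * 53 ^ 8 := by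
  obtain rfl : i = DivisionRing.toRatAlgebra := Subsingleton.elim _ _
  exact ⟨deg16 (α ^ 2) α h (IntermediateField.mem_adjoin_simple_self _ _) (notin_a α h) htop,
    final_a α (by rw [aeval_fx, h]) htop (notin_a α h)⟩

lemma main_b {K : Type*} [Field K] [NumberField K] [i : Algebra ℚ K] (β : K) (h : fx (-3 * β ^ 2) = 0) (htop : ℚ⟮β⟯ = ⊤) :
    Module.finrank ℚ K = 16 ∧ (NumberField.discr K).natAbs = 2 ^ 16 * 3 ^ 8 * 53 ^ 8 := by
  obtain rfl : i = DivisionRing.toRatAlgebra := Subsingleton.elim _ _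
  refine ⟨deg16 (-3 * β ^ 2) β h ?_ (notin_b β h) htop,
    final_b β (by rw [aeval_fx, h]) htop (notin_b β h)⟩
  have h1 : β ^ 2 = (-3 * β ^ 2) / (-3) := by field_simp
  have h2 : (-3 * β ^ 2) / (-3) ∈ ℚ⟮-3 * β ^ 2⟯ :=
    div_mem (IntermediateField.mem_adjoin_simple_self _ _) (neg_mem (ofNat_mem _ 3))
  rwa [← h1] at h2

lemma gen_top {F L : Type*} [Field F] [Field L] [Algebra F L] (α : L) (hi : IsIntegral F α) :
    F⟮AdjoinSimple.gen F α⟯ = ⊤ := by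
  have := (IntermediateField.adjoin.powerBasis hi).adjoin_gen_eq_top
  rw [IntermediateField.adjoin.powerBasis_gen] at this
  exact IntermediateField.adjoin_eq_top_of_algebra _ _ this

lemma nd_a : g5a.natDegree = 16 := by
  rw [g5a, natDegree_comp, f5_natDegree, natDegree_X_pow]

lemma nd_b : g5b.natDegree = 16 := by
  have : (-3 * X ^ 2 : ℚ[X]).natDegree = 2 := by compute_degree!
  rw [g5b, natDegree_comp, f5_natDegree, this]

lemma irr_of (g : ℚ[X]) (hg : g.natDegree = 16) (α : Qbar) (h : aeval α g = 0)
    (hf : Module.finrank ℚ ℚ⟮α⟯ = 16) : Irreducible g := by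
  have hg0 : g ≠ 0 := by rintro rfl; simp at hg
  have hi : IsIntegral ℚ α := IsAlgebraic.isIntegral ⟨g, hg0, h⟩
  rw [IntermediateField.adjoin.finrank hi] at hf
  have ha : Associated (minpoly ℚ α) g :=
    associated_of_dvd_of_natDegree_le (minpoly.dvd ℚ α h) hg0 (by omega)
  exact ha.irreducible (minpoly.irreducible hi)

lemma pack_a (α : Qbar) (h : aeval α g5a = 0) : Module.finrank ℚ ℚ⟮α⟯ = 16 ∧ |absd ℚ⟮α⟯| = 2 ^ 16 * 3 ^ 8 * 53 ^ 8 := by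
  have hi : IsIntegral ℚ α := IsAlgebraic.isIntegral ⟨g5a, by intro h0; have := nd_a; rw [h0] at this; simp at this, h⟩
  have hfd : FiniteDimensional ℚ ℚ⟮α⟯ := IntermediateField.adjoin.finiteDimensional hi
  have : NumberField ℚ⟮α⟯ := ⟨⟩
  have hz : fx ((AdjoinSimple.gen ℚ α) ^ 2) = 0 := by
    rw [aeval_ga] at h
    apply (algebraMap ℚ⟮α⟯ Qbar).injective
    rw [fx_map, map_zero, map_pow]; exact h
  obtain ⟨h1, h2⟩ := main_a (AdjoinSimple.gen ℚ α) hz (gen_top α hi)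
  refine ⟨h1, ?_⟩
  rw [absd, dif_pos hfd, Int.abs_eq_natAbs, h2]
  norm_num

lemma pack_b (α : Qbar) (h : aeval α g5b = 0) : Module.finrank ℚ ℚ⟮α⟯ = 16 ∧ |absd ℚ⟮α⟯| = 2 ^ 16 * 3 ^ 8 * 53 ^ 8 := by
  have hi : IsIntegral ℚ α := IsAlgebraic.isIntegral ⟨g5b, by intro h0; have := nd_b; rw [h0] at this; simp at this, h⟩
  have hfd : FiniteDimensional ℚ ℚ⟮α⟯ := IntermediateField.adjoin.finiteDimensional hi
  have : NumberField ℚ⟮α⟯ := ⟨⟩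
  have hz : fx (-3 * (AdjoinSimple.gen ℚ α) ^ 2) = 0 := by
    rw [aeval_gb] at h
    apply (algebraMap ℚ⟮α⟯ Qbar).injective
    rw [fx_map, map_zero, map_mul, map_pow, map_neg, map_ofNat]; exact h
  obtain ⟨h1, h2⟩ := main_b (AdjoinSimple.gen ℚ α) hz (gen_top α hi)
  refine ⟨h1, ?_⟩
  rw [absd, dif_pos hfd, Int.abs_eq_natAbs, h2]
  norm_num

lemma irr_a : Irreducible g5a := by
  obtain ⟨α, h⟩ := IsAlgClosed.exists_aeval_eq_zero Qbar g5a (by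
    apply degree_ne_of_natDegree_ne; rw [nd_a]; norm_num)
  exact irr_of _ nd_a α h (pack_a α h).1

lemma irr_b : Irreducible g5b := by
  obtain ⟨α, h⟩ := IsAlgClosed.exists_aeval_eq_zero Qbar g5b (by
    apply degree_ne_of_natDegree_ne; rw [nd_b]; norm_num)
  exact irr_of _ nd_b α h (pack_b α h).1

end assembly

theorem stmt5 :
    Irreducible g5a ∧ Irreducible g5b ∧ g5a.natDegree = 16 ∧ g5b.natDegree = 16 ∧
    (∀ α β : Qbar, aeval α g5a = 0 → aeval β g5b = 0 →
      ¬ Nonempty ((IntermediateField.adjoin ℚ {α}) ≃ₐ[ℚ] (IntermediateField.adjoin ℚ {β})) ∧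
      |absd (IntermediateField.adjoin ℚ {α})| = 2 ^ 16 * 3 ^ 8 * 53 ^ 8 ∧
      |absd (IntermediateField.adjoin ℚ {β})| = 2 ^ 16 * 3 ^ 8 * 53 ^ 8) := by
  refine ⟨irr_a, irr_b, nd_a, nd_b, ?_⟩
  intro α β hα hβ
  refine ⟨?_, (pack_a α hα).2, (pack_b β hβ).2⟩
  rintro ⟨e⟩
  obtain ⟨r, hr⟩ := rootA5
  obtain ⟨φ⟩ := lift_root g5a irr_a α hα r (by rw [aeval_ga, hr])
  let ψ : ℚ⟮β⟯ →+* ℚ_[5] := φ.comp (e.symm : ℚ⟮β⟯ →+* ℚ⟮α⟯)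
  apply norootB5 (ψ (AdjoinSimple.gen ℚ β))
  have hz : fx (-3 * (AdjoinSimple.gen ℚ β) ^ 2) = 0 := by
    rw [aeval_gb] at hβ
    apply (algebraMap ℚ⟮β⟯ Qbar).injective
    rw [fx_map, map_zero, map_mul, map_pow, map_neg, map_ofNat]; exact hβ
  have h2 := fx_map ψ (-3 * (AdjoinSimple.gen ℚ β) ^ 2)
  rw [hz, map_zero, map_mul, map_pow, map_neg, map_ofNat] at h2
  exact h2.symm

end
end

section
/- Let N/ℚ be a Galois extension of number fields with Gal(N/ℚ) isomorphic to PSL₂(𝔽₇). If K₇ ⊆ N is a subfield of degree 7 over ℚ and K₈ ⊆ N is a subfield of degree 8 over ℚ (so that N is the Galois closure of each), then the discriminant of K₇ divides the discriminant of K₈, and the discriminant of K₈ divides the square of the discriminant of K₇. -/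
open scoped MatrixGroups NumberField

set_option linter.unusedSectionVars false

/-- number of fixed points of `t` on `G ⧸ H` -/
noncomputable def fixN {G : Type*} [Group G] (H : Subgroup G) (t : G) : ℕ :=
  Nat.card {y : G ⧸ H // t • y = y}

section grp
variable {G : Type*} [Group G] [Finite G]

lemma fixN_le_pow (H : Subgroup G) (t : G) (k : ℕ) : fixN H t ≤ fixN H (t ^ k) := by
  refine Nat.card_le_card_of_injective
    (fun y : {y : G ⧸ H // t • y = y} => (⟨y.1, ?_⟩ : {y : G ⧸ H // t ^ k • y = y})) ?_
  · have h := y.2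
    induction k with
    | zero => simp
    | succ k ih => rw [pow_succ, mul_smul, h, ih]
  · intro a b hab
    simpa [Subtype.ext_iff] using hab

lemma fixN_lt (hs : IsSimpleGroup G) (H : Subgroup G) (hH : H ≠ ⊤) (t : G) (ht : t ≠ 1) :
    fixN H t < H.index := by
  have hle : fixN H t ≤ H.index := Nat.card_le_card_of_injective _ Subtype.val_injective
  refine lt_of_le_of_ne hle fun he => ht ?_
  have hb : Function.Bijective (Subtype.val : {y : G ⧸ H // t • y = y} → G ⧸ H) :=
    (Nat.bijective_iff_injective_and_card _).2 ⟨Subtype.val_injective, he⟩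
  have hall : ∀ y : G ⧸ H, t • y = y := fun y => by
    obtain ⟨z, rfl⟩ := hb.2 y
    exact z.2
  have hmem : t ∈ H.normalCore := by
    intro b
    have := hall (QuotientGroup.mk b⁻¹)
    rw [MulAction.Quotient.smul_mk, QuotientGroup.eq] at this
    have h2 := H.inv_mem this
    simpa [mul_assoc] using h2
  rcases hs.eq_bot_or_eq_top_of_normal H.normalCore inferInstance with h | h
  · rw [h] at hmem; simpa using hmem
  · exact absurd (top_le_iff.1 (h ▸ H.normalCore_le)) hH

lemma fixN_modEq (H : Subgroup G) (t : G) (p : ℕ) [Fact p.Prime] (ht : t ^ p = 1) :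
    H.index ≡ fixN H t [MOD p] := by
  classical
  have := Fintype.ofFinite (G ⧸ H)
  have h := Equiv.Perm.card_fixedPoints_modEq (α := G ⧸ H) (f := fun y => t • y) (p := p) (n := 1) ?_
  · rw [Subgroup.index, Nat.card_eq_fintype_card]
    convert h using 1
    rw [fixN, Nat.card_eq_fintype_card]
    rfl
  · rw [pow_one]
    have : ∀ k : ℕ, ((show Function.End (G ⧸ H) from fun y => t • y) ^ k) =
        fun y => t ^ k • y := by
      intro k
      induction k with
      | zero => funext y; rw [pow_zero, pow_zero, one_smul]; rfl
      | succ k ih =>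
        rw [pow_succ, ih]; funext y
        rw [pow_succ, mul_smul]; rfl
    refine (this p).trans ?_
    rw [ht]; funext y; rw [one_smul]; rfl

lemma fixN_even (H : Subgroup G) (h21 : Nat.card H = 21) (t : G) (ht : orderOf t = 2) :
    fixN H t = 0 := by
  rw [fixN, Nat.card_eq_zero]
  left
  constructor
  rintro ⟨y, hy⟩
  induction y using QuotientGroup.induction_on with
  | H b =>
  rw [MulAction.Quotient.smul_mk, eq_comm, QuotientGroup.eq] at hy
  have h1 : orderOf (⟨_, hy⟩ : H) = 2 := by
    rw [← Subgroup.orderOf_coe, ← ht]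
    have := orderOf_injective (MulAut.conj b⁻¹).toMonoidHom (MulAut.conj b⁻¹).injective t
    simpa [mul_assoc] using this
  have h2 := orderOf_dvd_natCard (⟨_, hy⟩ : H)
  rw [h1, h21] at h2
  omega

lemma fixN_invol (hs : IsSimpleGroup G) (hc : 2 < Nat.card G) (H : Subgroup G) (h7 : H.index = 7)
    (t : G) (ht : orderOf t = 2) : fixN H t ≤ 3 := by
  classical
  have : Fact (Nat.Prime 2) := ⟨Nat.prime_two⟩
  have := Fintype.ofFinite (G ⧸ H)
  have h1 := fixN_modEq H t 2 (by rw [← ht]; exact pow_orderOf_eq_one t)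
  have h2 := fixN_lt hs H (by rintro rfl; simp at h7) t (by rintro rfl; simp at ht)
  rw [h7] at h1 h2
  by_contra hcon
  have h5 : fixN H t = 5 := by
    have := h1.symm
    unfold Nat.ModEq at this
    omega
  let φ : G →* Equiv.Perm (G ⧸ H) := MulAction.toPermHom G (G ⧸ H)
  let s : G →* ℤˣ := Equiv.Perm.sign.comp φ
  have hsup : (φ t).support.card = 2 := by
    have e1 : (φ t).support.card + (φ t).supportᶜ.card = Fintype.card (G ⧸ H) :=
      Finset.card_add_card_compl _
    have e2 : (φ t).supportᶜ.card = 5 := by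
      rw [← h5, fixN, Nat.card_eq_fintype_card, Fintype.card_subtype]
      congr 1
      ext y
      simp [φ]
    have e3 : Fintype.card (G ⧸ H) = 7 := by rw [← h7, Subgroup.index, Nat.card_eq_fintype_card]
    omega
  have hsw := Equiv.Perm.card_support_eq_two.1 hsup
  have hsgn : s t = -1 := hsw.sign_eq
  rcases hs.eq_bot_or_eq_top_of_normal s.ker inferInstance with h | h
  · have hinj := (MonoidHom.ker_eq_bot_iff s).1 h
    have := Nat.card_le_card_of_injective s hinj
    simp at this
    omega
  · have : t ∈ s.ker := h ▸ Subgroup.mem_top t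
    rw [MonoidHom.mem_ker, hsgn] at this
    exact absurd this (by decide)

lemma fixN_three (hG : Nat.card G = 168) (H : Subgroup G) (h8 : H.index = 8)
    (t : G) (ht : orderOf t = 3) : fixN H t ≠ 5 := by
  intro h5
  have h21 : Nat.card H = 21 := by
    have := H.card_mul_index
    rw [h8, hG] at this; omega
  have : Fact (Nat.Prime 3) := ⟨Nat.prime_three⟩
  let S := Subgroup.zpowers t
  have hne : Nonempty {y : G ⧸ H // t • y = y} := by
    by_contra hcon
    rw [not_nonempty_iff] at hcon
    rw [fixN, Nat.card_eq_zero.2 (Or.inl hcon)] at h5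
    omega
  obtain ⟨y, hy⟩ := hne
  let Nn := Subgroup.normalizer (S : Set G)
  have horb : MulAction.orbit Nn y = {z : G ⧸ H | t • z = z} := by
    ext z
    constructor
    · rintro ⟨⟨n, hn⟩, rfl⟩
      have hn2 : n⁻¹ * t * n ∈ S := by
        have := ((Subgroup.mem_normalizer_iff'').1 hn t).1 (Subgroup.mem_zpowers t)
        exact this
      obtain ⟨k, hk⟩ := hn2
      have hst : ∀ s ∈ S, s • y = y := by
        intro s hs
        have : S ≤ MulAction.stabilizer G y := by
          rw [Subgroup.zpowers_le]; exact hy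
        exact this hs
      have := hst _ ⟨k, hk⟩
      change t • n • y = n • y
      rw [mul_smul, mul_smul, inv_smul_eq_iff] at this
      exact this
    · intro hz
      obtain ⟨g, rfl⟩ := MulAction.exists_smul_eq G y z
      let K := MulAction.stabilizer G y
      have hK : Nat.card K = 21 := by
        have := MulAction.index_stabilizer_of_transitive G y
        have h3 := K.card_mul_index
        rw [this] at h3
        have h4 : Nat.card (G ⧸ H) = 8 := h8
        rw [h4, hG] at h3; omega
      have hSK : t ∈ K := hy
      have hgK : g⁻¹ * t * g ∈ K := by
        change (g⁻¹ * t * g) • y = y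
        rw [mul_smul, mul_smul, inv_smul_eq_iff]; exact hz
      have hcard : ∀ a : K, orderOf a = 3 → Nat.card (Subgroup.zpowers a) =
          3 ^ (Nat.card K).factorization 3 := by
        intro a ha
        rw [Nat.card_zpowers, ha, hK]
        rw [show (21:ℕ) = 3 * 7 by norm_num, Nat.factorization_mul (by norm_num) (by norm_num)]
        simp [Nat.Prime.factorization Nat.prime_three,
          Nat.factorization_eq_zero_of_not_dvd (show ¬ 3 ∣ 7 by norm_num)]
      have ha : orderOf (⟨t, hSK⟩ : K) = 3 := by rw [← Subgroup.orderOf_coe]; exact ht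
      have hb : orderOf (⟨_, hgK⟩ : K) = 3 := by
        rw [← Subgroup.orderOf_coe, ← ht]
        have := orderOf_injective (MulAut.conj g⁻¹).toMonoidHom (MulAut.conj g⁻¹).injective t
        simpa using this
      let A : Sylow 3 K := Sylow.ofCard _ (hcard _ ha)
      let B : Sylow 3 K := Sylow.ofCard _ (hcard _ hb)
      obtain ⟨h, hh⟩ := MulAction.exists_smul_eq K B A
      have hmem : h * ⟨_, hgK⟩ * h⁻¹ ∈ (A : Subgroup K) := by
        rw [← hh, Sylow.coe_subgroup_smul, Subgroup.mem_pointwise_smul_iff_inv_smul_mem]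
        have : (MulAut.conj h)⁻¹ • (h * ⟨_, hgK⟩ * h⁻¹) = (⟨_, hgK⟩ : K) := by
          rw [← map_inv, MulAut.smul_def, MulAut.conj_apply]; group
        rw [this]
        exact Subgroup.mem_zpowers _
      have hmem' : (h : G) * (g⁻¹ * t * g) * (h : G)⁻¹ ∈ S := by
        obtain ⟨k, hk⟩ := hmem
        refine ⟨k, ?_⟩
        have := congrArg (Subtype.val) hk
        simpa using this
      have hnorm : (h : G) * g⁻¹ ∈ Nn := by
        have hle : S.map (MulAut.conj ((h : G) * g⁻¹)).toMonoidHom ≤ S := by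
          rw [MonoidHom.map_zpowers, Subgroup.zpowers_le]
          simpa [mul_assoc] using hmem'
        have heq : S.map (MulAut.conj ((h : G) * g⁻¹)).toMonoidHom = S := by
          apply Subgroup.eq_of_le_of_card_ge hle
          rw [Subgroup.card_map_of_injective (MulAut.conj ((h : G) * g⁻¹)).injective]
        rw [Subgroup.mem_normalizer_iff]
        intro s
        conv_rhs => rw [← SetLike.mem_coe, ← heq]
        constructor
        · intro hs; exact ⟨s, hs, rfl⟩
        · rintro ⟨s', hs', he⟩
          have : s' = s := (MulAut.conj ((h : G) * g⁻¹)).injective he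
          exact this ▸ hs'
      refine ⟨⟨_, Nn.inv_mem hnorm⟩, ?_⟩
      change ((h : G) * g⁻¹)⁻¹ • y = g • y
      have hhy : (h : G)⁻¹ • y = y := (K.inv_mem h.2)
      rw [mul_inv_rev, inv_inv, mul_smul, hhy]
  have h5' : Nat.card (MulAction.orbit Nn y) = 5 := by
    rw [horb]; exact h5
  have hdvd : 5 ∣ Nat.card Nn := by
    rw [← h5', ← Nat.card_congr (MulAction.orbitEquivQuotientStabilizer Nn y).symm]
    exact Subgroup.card_quotient_dvd_card _
  have := hdvd.trans Nn.card_subgroup_dvd_card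
  rw [hG] at this
  omega

lemma key_ineq (hs : IsSimpleGroup G) (hG : Nat.card G = 168) (H7 H8 : Subgroup G)
    (h7 : H7.index = 7) (h8 : H8.index = 8) (t : G) (ht : t ≠ 1) :
    7 - fixN H7 t ≤ 8 - fixN H8 t ∧ 8 - fixN H8 t ≤ 2 * (7 - fixN H7 t) := by
  have h21 : Nat.card H8 = 21 := by
    have := H8.card_mul_index
    rw [h8, hG] at this; omega
  have hn7 : H7 ≠ ⊤ := by rintro rfl; simp at h7
  have hn8 : H8 ≠ ⊤ := by rintro rfl; simp at h8
  have hpos := orderOf_pos t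
  by_cases d7 : 7 ∣ orderOf t
  · have : Fact (Nat.Prime 7) := ⟨by norm_num⟩
    have ho := orderOf_pow_orderOf_div hpos.ne' d7
    set r := t ^ (orderOf t / 7) with hr
    have hr1 : r ≠ 1 := by intro h; rw [h] at ho; simp at ho
    have hrp : r ^ 7 = 1 := by rw [← ho]; exact pow_orderOf_eq_one r
    have a1 := fixN_le_pow H7 t (orderOf t / 7)
    have a2 := fixN_le_pow H8 t (orderOf t / 7)
    rw [← hr] at a1 a2
    have b1 := fixN_lt hs H7 hn7 r hr1
    have b2 := fixN_lt hs H8 hn8 r hr1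
    have c1 := fixN_modEq H7 r 7 hrp
    have c2 := fixN_modEq H8 r 7 hrp
    rw [h7] at b1 c1
    rw [h8] at b2 c2
    unfold Nat.ModEq at c1 c2
    omega
  by_cases d2 : 2 ∣ orderOf t
  · have ho := orderOf_pow_orderOf_div hpos.ne' d2
    set r := t ^ (orderOf t / 2) with hr
    have a1 := fixN_le_pow H7 t (orderOf t / 2)
    have a2 := fixN_le_pow H8 t (orderOf t / 2)
    rw [← hr] at a1 a2
    have b1 := fixN_invol hs (by omega) H7 h7 r ho
    have b2 := fixN_even H8 h21 r ho
    omega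
  have : Fact (Nat.Prime 3) := ⟨by norm_num⟩
  have ho : orderOf t = 3 := by
    have hd := orderOf_dvd_natCard t
    rw [hG, show 168 = 2 ^ 3 * (7 * 3) by norm_num] at hd
    have k1 : (orderOf t).Coprime (2 ^ 3) :=
      Nat.Coprime.pow_right _ ((Nat.Prime.coprime_iff_not_dvd Nat.prime_two).2 d2).symm
    have k2 : (orderOf t).Coprime 7 :=
      ((Nat.Prime.coprime_iff_not_dvd (by norm_num)).2 d7).symm
    have hd3 := k2.dvd_of_dvd_mul_left (k1.dvd_of_dvd_mul_left hd)
    rcases (Nat.dvd_prime Nat.prime_three).1 hd3 with h | h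
    · exact absurd (orderOf_eq_one_iff.1 h) ht
    · exact h
  have hp : t ^ 3 = 1 := by rw [← ho]; exact pow_orderOf_eq_one t
  have b1 := fixN_lt hs H7 hn7 t ht
  have b2 := fixN_lt hs H8 hn8 t ht
  have c1 := fixN_modEq H7 t 3 hp
  have c2 := fixN_modEq H8 t 3 hp
  have e := fixN_three hG H8 h8 t ho
  rw [h7] at b1 c1
  rw [h8] at b2 c2
  unfold Nat.ModEq at c1 c2
  omega

lemma card_conj_mem (H : Subgroup G) (t : G) :
    Nat.card {g : G // g⁻¹ * t * g ∈ H} = Nat.card H * fixN H t := by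
  rw [fixN]
  refine Eq.trans ?_ (QuotientGroup.card_preimage_mk H {y : G ⧸ H | t • y = y})
  refine Nat.card_congr (Equiv.subtypeEquivRight fun g => ?_)
  change _ ↔ t • (QuotientGroup.mk g : G ⧸ H) = QuotientGroup.mk g
  rw [MulAction.Quotient.smul_mk, eq_comm, QuotientGroup.eq, mul_assoc]
  rfl

lemma weight_formula [Fintype G] (H : Subgroup G) [DecidablePred (· ∈ H)] (w : G → ℕ)
    (hw : ∀ g t, w (g * t * g⁻¹) = w t) (D : ℕ)
    (hD : D ^ Nat.card H = ∏ t : G, if t ∈ H then 1 else w t) :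
    D ^ Nat.card G = ∏ t : G, w t ^ (H.index - fixN H t) := by
  classical
  have h1 : (D ^ Nat.card H) ^ Nat.card G =
      ∏ g : G, ∏ t : G, if g⁻¹ * t * g ∈ H then 1 else w t := by
    rw [Nat.card_eq_fintype_card (α := G), ← Finset.card_univ, ← Finset.prod_const]
    refine Finset.prod_congr rfl fun g _ => ?_
    rw [hD]
    refine Fintype.prod_equiv (MulAut.conj g).toEquiv _ _ fun t => ?_
    have : g⁻¹ * (g * t * g⁻¹) * g = t := by group
    simp [this, hw]
  rw [Finset.prod_comm] at h1
  have h2 : ∀ t : G, (∏ g : G, if g⁻¹ * t * g ∈ H then 1 else w t) =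
      (w t ^ (H.index - fixN H t)) ^ Nat.card H := by
    intro t
    rw [Finset.prod_ite, Finset.prod_const_one, one_mul, Finset.prod_const, ← pow_mul]
    congr 1
    have e := card_conj_mem H t
    rw [Nat.card_eq_fintype_card, Fintype.card_subtype] at e
    have e2 := Finset.card_filter_add_card_filter_not (s := (Finset.univ : Finset G))
      (fun g => g⁻¹ * t * g ∈ H)
    have e3 := H.card_mul_index
    rw [Nat.card_eq_fintype_card (α := G), ← Finset.card_univ] at e3
    rw [Nat.sub_mul, mul_comm H.index, mul_comm (fixN H t), e3, ← e]
    omega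
  simp_rw [h2] at h1
  rw [Finset.prod_pow, ← pow_mul, mul_comm, pow_mul] at h1
  exact Nat.pow_left_injective (Nat.card_pos.ne') h1

theorem group_main (hs : IsSimpleGroup G) (hG : Nat.card G = 168) [Fintype G] (H7 H8 : Subgroup G)
    [DecidablePred (· ∈ H7)] [DecidablePred (· ∈ H8)]
    (h7 : H7.index = 7) (h8 : H8.index = 8) (w : G → ℕ)
    (hw : ∀ g t, w (g * t * g⁻¹) = w t) (D7 D8 : ℕ)
    (hD7 : D7 ^ Nat.card H7 = ∏ t : G, if t ∈ H7 then 1 else w t)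
    (hD8 : D8 ^ Nat.card H8 = ∏ t : G, if t ∈ H8 then 1 else w t) :
    D7 ∣ D8 ∧ D8 ∣ D7 ^ 2 := by
  have e7 := weight_formula H7 w hw D7 hD7
  have e8 := weight_formula H8 w hw D8 hD8
  have hone : ∀ H : Subgroup G, fixN H 1 = H.index := fun H => by
    simp [fixN, Subgroup.index]
  rw [h7] at e7
  rw [h8] at e8
  constructor
  · rw [← Nat.pow_dvd_pow_iff (n := Nat.card G) Nat.card_pos.ne', e7, e8]
    refine Finset.prod_dvd_prod_of_dvd _ _ fun t _ => pow_dvd_pow _ ?_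
    by_cases ht : t = 1
    · subst ht; simp [hone, h7]
    · exact (key_ineq hs hG H7 H8 h7 h8 t ht).1
  · rw [← Nat.pow_dvd_pow_iff (n := Nat.card G) Nat.card_pos.ne', pow_right_comm, e7, e8,
      ← Finset.prod_pow]
    refine Finset.prod_dvd_prod_of_dvd _ _ fun t _ => ?_
    rw [← pow_mul]
    refine pow_dvd_pow _ ?_
    by_cases ht : t = 1
    · subst ht; simp [hone, h8]
    · rw [mul_comm]; exact (key_ineq hs hG H7 H8 h7 h8 t ht).2

end grp

lemma card_PSL27 : Nat.card PSL(2, ZMod 7) = 168 := by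
  have hne : (-1 : ZMod 7) ^ 1 ≠ 1 := by decide
  have : Fact (Nat.Prime 7) := ⟨by norm_num⟩
  have h1 : Nat.card (Subgroup.center SL(2, ZMod 7)) = 2 := by
    rw [Nat.card_congr Matrix.SpecialLinearGroup.center_equiv_rootsOfUnity.toEquiv]
    have hp : IsPrimitiveRoot (-1 : ZMod 7) 2 := by
      refine IsPrimitiveRoot.mk_of_lt _ (by norm_num) (by norm_num) ?_
      intro l h1 h2
      have : l = 1 := by omega
      subst this
      exact hne
    have := hp.card_rootsOfUnity
    simpa [Nat.card_eq_fintype_card] using this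
  have h2 : Nat.card SL(2, ZMod 7) = 336 := by
    rw [Nat.card_eq_fintype_card]
    decide +kernel
  have h3 := Subgroup.card_eq_card_quotient_mul_card_subgroup (Subgroup.center SL(2, ZMod 7))
  rw [h1, h2] at h3
  change Nat.card (SL(2, ZMod 7) ⧸ Subgroup.center SL(2, ZMod 7)) = 168
  omega

section nt
variable {B : Type*} [CommRing B] [IsDedekindDomain B] [CharZero B] [Module.Finite ℤ B] [Module.IsTorsionFree ℤ B]

lemma exists_theta (P : Ideal B) [P.IsPrime] (hP : P ≠ ⊥) :
    ∃ θ : B, ∃ q : ℕ, 1 ≤ q ∧ θ ∉ P ∧ θ ^ (q + 1) - θ ∈ P ∧ θ ^ (q + 1) - θ ∉ P ^ 2 ∧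
      ∀ b : B, b ∈ P ∨ ∃ i : ℕ, b - θ ^ i ∈ P := by
  have hmax : P.IsMaximal := Ideal.IsPrime.isMaximal ‹_› hP
  have hfin : Finite (B ⧸ P) := Ideal.finiteQuotientOfFreeOfNeBot P hP
  let _ := Ideal.Quotient.field P
  have := Fintype.ofFinite (B ⧸ P)
  obtain ⟨u, hu⟩ := IsCyclic.exists_generator (α := (B ⧸ P)ˣ)
  obtain ⟨θ₀, hθ₀⟩ := Ideal.Quotient.mk_surjective (u : B ⧸ P)
  obtain ⟨π, hπ, hπ2⟩ : ∃ π ∈ P, π ∉ P ^ 2 := by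
    have : ¬ P ≤ P ^ 2 := by
      intro h
      have h2 := (Ideal.pow_right_strictAnti P hP (Ideal.IsPrime.ne_top ‹_›)) (show 1 < 2 by norm_num)
      have h3 : P ^ 2 < P ^ 1 := h2
      rw [pow_one] at h3
      exact absurd h h3.not_ge
    exact Set.not_subset.1 this
  let q := Fintype.card (B ⧸ P)
  have hq2 : 1 < q := Fintype.one_lt_card
  have hgen : ∀ θ : B, Ideal.Quotient.mk P θ = u → θ ∉ P ∧ θ ^ q - θ ∈ P ∧
      ∀ b : B, b ∈ P ∨ ∃ i : ℕ, b - θ ^ i ∈ P := by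
    intro θ hθ
    refine ⟨?_, ?_, ?_⟩
    · rw [← Ideal.Quotient.eq_zero_iff_mem, hθ]; exact u.ne_zero
    · rw [← Ideal.Quotient.eq_zero_iff_mem, map_sub, map_pow, FiniteField.pow_card, sub_self]
    · intro b
      by_cases hb : b ∈ P
      · exact Or.inl hb
      right
      have hb' : Ideal.Quotient.mk P b ≠ 0 := by rwa [Ne, Ideal.Quotient.eq_zero_iff_mem]
      obtain ⟨i, hi⟩ := (mem_powers_iff_mem_zpowers.2 (hu (Units.mk0 _ hb')))
      refine ⟨i, ?_⟩
      rw [← Ideal.Quotient.eq_zero_iff_mem, map_sub, map_pow, hθ]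
      have := congrArg Units.val hi
      simp at this
      rw [this, sub_self]
  have hqP : (q : B) ∈ P := by
    rw [← Ideal.Quotient.eq_zero_iff_mem, map_natCast]
    exact Nat.cast_card_eq_zero (B ⧸ P)
  have key : ∃ θ : B, Ideal.Quotient.mk P θ = u ∧ θ ^ q - θ ∉ P ^ 2 := by
    by_cases h : θ₀ ^ q - θ₀ ∈ P ^ 2
    · refine ⟨θ₀ + π, ?_, ?_⟩
      · rw [map_add, hθ₀, Ideal.Quotient.eq_zero_iff_mem.2 hπ, add_zero]
      · intro h2
        apply hπ2
        obtain ⟨c, hc⟩ := (Polynomial.powAddExpansion θ₀ π q)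
        have e : π = (θ₀ ^ q - θ₀) - ((θ₀ + π) ^ q - (θ₀ + π)) + (q * π) * θ₀ ^ (q - 1)
            + c * π ^ 2 := by rw [hc]; ring
        rw [e]
        refine Ideal.add_mem _ (Ideal.add_mem _ (Ideal.sub_mem _ h h2) ?_) ?_
        · refine Ideal.mul_mem_right _ _ ?_
          rw [pow_two]; exact Ideal.mul_mem_mul hqP hπ
        · exact Ideal.mul_mem_left _ _ (Ideal.pow_mem_pow hπ 2)
    · exact ⟨θ₀, hθ₀, h⟩
  obtain ⟨θ, h1, h2⟩ := key
  obtain ⟨g1, g2, g3⟩ := hgen θ h1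
  refine ⟨θ, q - 1, by omega, g1, ?_, ?_, g3⟩
  · rwa [Nat.sub_add_cancel hq2.le]
  · rwa [Nat.sub_add_cancel hq2.le]

lemma exists_local_gen (P : Ideal B) [P.IsPrime] (hP : P ≠ ⊥) :
    ∃ x : B, ∃ c ∈ conductor ℤ x, c ∉ P := by
  classical
  have hmax : P.IsMaximal := Ideal.IsPrime.isMaximal ‹_› hP
  obtain ⟨θ, q, hq, hθP, hθ1, hθ2, hgen⟩ := exists_theta P hP
  obtain ⟨m, hm0, hmP⟩ : ∃ m : ℕ, m ≠ 0 ∧ (m : B) ∈ P :=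
    ⟨Ideal.absNorm P, by rwa [Ne, Ideal.absNorm_eq_zero_iff], Ideal.absNorm_mem P⟩
  have hmI : Ideal.span {(m : B)} ≠ ⊥ := by
    rw [Ne, Ideal.span_singleton_eq_bot]; exact_mod_cast hm0
  -- the other primes over m
  let T : Finset (Ideal B) := (UniqueFactorizationMonoid.factors (Ideal.span {(m : B)})).toFinset.erase P
  have hT : ∀ Q : Ideal B, Q.IsMaximal → (m : B) ∈ Q → Q ≠ P → Q ∈ T := by
    intro Q hQ hmQ hne
    have hQ0 : Q ≠ ⊥ := by
      rintro rfl
      rw [Ideal.mem_bot] at hmQ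
      exact hm0 (by exact_mod_cast hmQ)
    have hQp : Prime Q := Ideal.prime_of_isPrime hQ0 hQ.isPrime
    have hdvd : Q ∣ Ideal.span {(m : B)} := by
      rw [Ideal.dvd_span_singleton]; exact hmQ
    obtain ⟨Q', h1, h2⟩ := UniqueFactorizationMonoid.exists_mem_factors_of_dvd hmI hQp.irreducible hdvd
    rw [associated_iff_eq] at h2
    subst h2
    exact Finset.mem_erase.2 ⟨hne, Multiset.mem_toFinset.2 h1⟩
  have hTP : ∀ Q ∈ T, Q.IsMaximal ∧ Q ≠ P := by
    intro Q hQ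
    obtain ⟨h1, h2⟩ := Finset.mem_erase.1 hQ
    have h3 := UniqueFactorizationMonoid.prime_of_factor Q (Multiset.mem_toFinset.1 h2)
    exact ⟨(Ideal.isPrime_of_prime h3).isMaximal h3.ne_zero, h1⟩
  let J : Ideal B := ∏ Q ∈ T, Q
  have hcop : IsCoprime (P ^ 2) J := by
    refine IsCoprime.pow_left (IsCoprime.prod_right fun Q hQ => ?_)
    obtain ⟨h1, h2⟩ := hTP Q hQ
    exact Ideal.isCoprime_of_isMaximal h2.symm
  obtain ⟨x, hxP, hxJ⟩ : ∃ x : B, x - θ ∈ P ^ 2 ∧ x ∈ J := by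
    obtain ⟨i, hi, j, hj, hij⟩ := Ideal.isCoprime_iff_exists.1 hcop
    refine ⟨j * θ, ?_, Ideal.mul_mem_right _ _ hj⟩
    have : j * θ - θ = -(i * θ) := by linear_combination θ * hij
    rw [this]
    exact neg_mem (Ideal.mul_mem_right _ _ hi)
  have hxP1 : x - θ ∈ P := Ideal.pow_le_self two_ne_zero hxP
  have hpow : ∀ (I : Ideal B) (k : ℕ), x - θ ∈ I → x ^ k - θ ^ k ∈ I := fun I k h =>
    I.mem_of_dvd (sub_dvd_pow_sub_pow x θ k) h
  have hx0 : x ∉ P := fun h => hθP (by simpa using P.sub_mem h hxP1)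
  have hx1 : x ^ (q + 1) - x ∈ P := by
    have := P.add_mem (P.sub_mem (hpow P (q + 1) hxP1) hxP1) hθ1
    convert this using 1; ring
  have hx2 : x ^ (q + 1) - x ∉ P ^ 2 := by
    intro h
    apply hθ2
    have := (P ^ 2).add_mem ((P ^ 2).sub_mem h (hpow _ (q + 1) hxP)) hxP
    convert this using 1; ring
  have hx3 : x ^ q - 1 ∈ P := by
    have : x * (x ^ q - 1) ∈ P := by convert hx1 using 1; ring
    exact (Ideal.IsPrime.mem_or_mem ‹_› this).resolve_left hx0
  have hgenx : ∀ b : B, b ∈ P ∨ ∃ i : ℕ, b - x ^ i ∈ P := by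
    intro b
    refine (hgen b).imp_right fun ⟨i, hi⟩ => ⟨i, ?_⟩
    have := P.sub_mem hi (hpow P i hxP1)
    convert this using 1; ring
  let R := Algebra.adjoin ℤ {x}
  have hxR : x ∈ R := Algebra.self_mem_adjoin_singleton ℤ x
  let 𝔮 : Ideal R := P.comap (algebraMap R B)
  have hmap : 𝔮.map (algebraMap R B) = P := by
    have hle : 𝔮.map (algebraMap R B) ≤ P := Ideal.map_comap_le
    obtain ⟨M, hM⟩ := Ideal.dvd_iff_le.2 hle
    have hMtop : M = ⊤ := by
      by_contra hne
      obtain ⟨Q, hQ, hMQ⟩ := Ideal.exists_le_maximal M hne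
      have hqQ : 𝔮.map (algebraMap R B) ≤ Q := by rw [hM]; exact Ideal.mul_le_right.trans hMQ
      have hin : ∀ y : R, (y : B) ∈ P → (y : B) ∈ Q := fun y hy =>
        hqQ (Ideal.mem_map_of_mem (algebraMap R B) (show y ∈ 𝔮 from hy))
      by_cases hQP : Q = P
      · apply hx2
        have h1 := Ideal.mem_map_of_mem (algebraMap R B)
          (show (⟨x ^ (q + 1) - x, sub_mem (pow_mem hxR _) hxR⟩ : R) ∈ 𝔮 from hx1)
        rw [hM] at h1
        have h2 : P * M ≤ P ^ 2 := by
          rw [pow_two]; exact Ideal.mul_mono_right (hMQ.trans hQP.le)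
        exact h2 h1
      · have hmQ : (m : B) ∈ Q := hin (m : R) (by simpa using hmP)
        have hQT := hT Q hQ hmQ hQP
        have hxQ : x ∈ Q := (Ideal.le_of_dvd (Finset.dvd_prod_of_mem id hQT)) hxJ
        have h1 : x ^ q - 1 ∈ Q := hin ⟨x ^ q - 1, sub_mem (pow_mem hxR _) (one_mem _)⟩ hx3
        have h2 : x ^ q ∈ Q := Q.pow_mem_of_mem hxQ q (by omega)
        apply hQ.ne_top
        rw [Ideal.eq_top_iff_one]
        have := Q.sub_mem h2 h1
        simpa using this
    rw [hM, hMtop, Ideal.mul_top]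
  let N1 : Submodule R B := 1
  have hfg : (⊤ : Submodule R (B ⧸ N1)).FG := by
    have : Module.Finite R B := Module.Finite.of_restrictScalars_finite ℤ R B
    exact Module.Finite.fg_top
  have hle : (⊤ : Submodule R (B ⧸ N1)) ≤ 𝔮 • ⊤ := by
    rintro z -
    obtain ⟨b, rfl⟩ := Submodule.Quotient.mk_surjective _ z
    have hsm : ∀ b ∈ P, (Submodule.Quotient.mk b : B ⧸ N1) ∈ 𝔮 • (⊤ : Submodule R (B ⧸ N1)) := by
      intro b hb
      rw [← hmap] at hb
      have h1 : b ∈ 𝔮 • (⊤ : Submodule R B) := by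
        rw [Ideal.smul_top_eq_map]; exact hb
      have h2 := Submodule.mem_map_of_mem (f := N1.mkQ) h1
      rw [Submodule.map_smul''] at h2
      exact (Submodule.smul_mono le_rfl le_top) h2
    rcases hgenx b with hb | ⟨i, hi⟩
    · exact hsm b hb
    · have := hsm _ hi
      rw [Submodule.Quotient.mk_sub] at this
      have h0 : (Submodule.Quotient.mk (x ^ i) : B ⧸ N1) = 0 := by
        rw [Submodule.Quotient.mk_eq_zero]
        exact Submodule.mem_one.2 ⟨⟨x ^ i, pow_mem hxR i⟩, rfl⟩
      rwa [h0, sub_zero] at this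
  obtain ⟨r, hr1, hr2⟩ := Submodule.exists_sub_one_mem_and_smul_eq_zero_of_fg_of_le_smul 𝔮 _ hfg hle
  refine ⟨x, (r : B), ?_, ?_⟩
  · rw [mem_conductor_iff]
    intro b
    have := hr2 (Submodule.Quotient.mk b) trivial
    rw [← Submodule.Quotient.mk_smul, Submodule.Quotient.mk_eq_zero] at this
    obtain ⟨y, hy⟩ := Submodule.mem_one.1 this
    have e : (r : B) * b = (y : B) := hy.symm
    rw [e]; exact y.2
  · intro hr
    have : (r : B) - 1 ∈ P := hr1
    apply hmax.ne_top
    rw [Ideal.eq_top_iff_one]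
    simpa using P.sub_mem hr this
end nt

lemma adjoin_int_le {A B : Type*} [CommRing A] [CommRing B] [Algebra A B] (x y : B)
    (hy : y ∈ Algebra.adjoin ℤ {x}) : y ∈ Algebra.adjoin A {x} := by
  induction hy using Algebra.adjoin_induction with
  | mem z hz => exact Algebra.subset_adjoin hz
  | algebraMap r => simp
  | add a b _ _ ha hb => exact add_mem ha hb
  | mul a b _ _ ha hb => exact mul_mem ha hb

lemma adjoin_int_sub {B : Type*} [CommRing B] (f : B →+* B) (x y : B)
    (hy : y ∈ Algebra.adjoin ℤ {x}) : y - f y ∈ Ideal.span {x - f x} := by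
  induction hy using Algebra.adjoin_induction with
  | mem z hz => rw [Set.mem_singleton_iff.1 hz]; exact Ideal.mem_span_singleton_self _
  | algebraMap r => simp
  | add a b _ _ ha hb =>
    have := add_mem ha hb
    convert this using 1; rw [map_add]; ring
  | mul a b _ _ ha hb =>
    have := add_mem (Ideal.mul_mem_left _ a hb) (Ideal.mul_mem_right (f b) _ ha)
    convert this using 1; rw [map_mul]; ring

/-- the ideal generated by all `b - s b` -/
def ramI {N : Type*} [Field N] (s : N ≃+* N) : Ideal (𝓞 N) :=
  Ideal.span (Set.range fun b : 𝓞 N => b - NumberField.RingOfIntegers.mapRingEquiv s b)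

section nf
open NumberField Polynomial
variable {N : Type*} [Field N] [NumberField N]

lemma conductor_mul_ramI (s : N ≃+* N) (x c : 𝓞 N) (hc : c ∈ conductor ℤ x) :
    Ideal.span {c} * ramI s ≤ Ideal.span {x - RingOfIntegers.mapRingEquiv s x} := by
  rw [ramI, Ideal.span_mul_span', Ideal.span_le]
  rintro _ ⟨c', hc', _, ⟨b, rfl⟩, rfl⟩
  rw [Set.mem_singleton_iff] at hc'
  subst hc'
  have h1 := adjoin_int_sub (RingOfIntegers.mapRingEquiv s : 𝓞 N →+* 𝓞 N) x _ (hc b)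
  have h2 := adjoin_int_sub (RingOfIntegers.mapRingEquiv s : 𝓞 N →+* 𝓞 N) x _ (hc 1)
  rw [mul_one] at h2
  have := sub_mem h1 (Ideal.mul_mem_right (RingOfIntegers.mapRingEquiv s b) _ h2)
  have e : c' * (b - RingOfIntegers.mapRingEquiv s b) =
      (c' * b - (RingOfIntegers.mapRingEquiv s : 𝓞 N →+* 𝓞 N) (c' * b)) -
      (c' - (RingOfIntegers.mapRingEquiv s : 𝓞 N →+* 𝓞 N) c') * RingOfIntegers.mapRingEquiv s b := by
    rw [map_mul]
    change _ = (c' * b - RingOfIntegers.mapRingEquiv s c' * RingOfIntegers.mapRingEquiv s b) -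
      (c' - RingOfIntegers.mapRingEquiv s c') * RingOfIntegers.mapRingEquiv s b
    ring
  change c' * (b - RingOfIntegers.mapRingEquiv s b) ∈
    Ideal.span {x - RingOfIntegers.mapRingEquiv s x}
  rw [e]
  exact this

lemma adjoin_eq_top_of_conductor (K : Type*) [Field K] [NumberField K] [Algebra K N]
    (x c : 𝓞 N) (hc : c ∈ conductor ℤ x) (hc0 : c ≠ 0) :
    Algebra.adjoin K {algebraMap (𝓞 N) N x} = ⊤ := by
  have hint : IsAlgebraic K (algebraMap (𝓞 N) N x) := Algebra.IsAlgebraic.isAlgebraic _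
  have : FiniteDimensional K N := FiniteDimensional.right ℚ K N
  rw [← IntermediateField.adjoin_simple_toSubalgebra_of_isAlgebraic hint,
    ← IntermediateField.top_toSubalgebra]
  congr 1
  rw [eq_top_iff]
  rintro n -
  have hmem : ∀ y ∈ Algebra.adjoin ℤ {x},
      algebraMap (𝓞 N) N y ∈ IntermediateField.adjoin K {algebraMap (𝓞 N) N x} := by
    intro y hy
    induction hy using Algebra.adjoin_induction with
    | mem z hz =>
      rw [Set.mem_singleton_iff.1 hz]; exact IntermediateField.mem_adjoin_simple_self K _
    | algebraMap r => simp
    | add a b _ _ ha hb => rw [map_add]; exact add_mem ha hb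
    | mul a b _ _ ha hb => rw [map_mul]; exact mul_mem ha hb
  have hcN : algebraMap (𝓞 N) N c ≠ 0 := by simpa using hc0
  have hall : ∀ y : 𝓞 N, algebraMap (𝓞 N) N y ∈
      IntermediateField.adjoin K {algebraMap (𝓞 N) N x} := by
    intro y
    have h1 := hmem _ (hc y)
    have h2 := hmem _ (hc 1)
    rw [mul_one] at h2
    have h3 := div_mem h1 h2
    rwa [map_mul, mul_div_cancel_left₀ _ hcN] at h3
  obtain ⟨a, b, hb, rfl⟩ := IsFractionRing.div_surjective (A := 𝓞 N) n
  exact div_mem (hall a) (hall b)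

lemma minpoly_eq_prod (K : Type*) [Field K] [Algebra K N] [FiniteDimensional K N]
    [IsGalois K N] (x : N) (hx : Algebra.adjoin K {x} = ⊤) :
    (minpoly K x).map (algebraMap K N) = ∏ s : N ≃ₐ[K] N, (X - C (s x)) := by
  have hint : IsIntegral K x := Algebra.IsIntegral.isIntegral x
  have hinj : Function.Injective (fun s : N ≃ₐ[K] N => s x) := by
    intro s t hst
    have : (s : N →ₐ[K] N) = t := AlgHom.ext_of_adjoin_eq_top hx (by
      intro y hy
      rw [Set.mem_singleton_iff.1 hy]
      exact hst)
    ext y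
    exact DFunLike.congr_fun this y
  have hdvd : (∏ s : N ≃ₐ[K] N, (X - C (s x))) ∣ (minpoly K x).map (algebraMap K N) := by
    refine Finset.prod_dvd_of_coprime (fun a _ b _ h => pairwise_coprime_X_sub_C hinj h) ?_
    intro s _
    rw [dvd_iff_isRoot, IsRoot, eval_map_algebraMap]
    have := minpoly.aeval K x
    have h2 := congrArg s this
    rw [map_zero, ← Polynomial.aeval_algHom_apply] at h2
    exact h2
  refine (eq_of_monic_of_dvd_of_natDegree_le (monic_prod_of_monic _ _ fun s _ => monic_X_sub_C _)
    ((minpoly.monic hint).map _) hdvd ?_)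
  rw [natDegree_prod_of_monic _ _ (fun s _ => monic_X_sub_C _)]
  simp only [natDegree_X_sub_C, Finset.sum_const, smul_eq_mul, mul_one, Finset.card_univ]
  rw [(minpoly.monic hint).natDegree_map, ← Nat.card_eq_fintype_card,
    IsGalois.card_aut_eq_finrank]
  exact minpoly.natDegree_le x

lemma deriv_eq_prod (K : Type*) [Field K] [NumberField K] [Algebra K N] [FiniteDimensional K N]
    [IsGalois K N] [DecidableEq (N ≃ₐ[K] N)] (x : 𝓞 N)
    (hx : Algebra.adjoin K {algebraMap (𝓞 N) N x} = ⊤) :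
    aeval x (derivative (minpoly (𝓞 K) x)) =
      ∏ s ∈ Finset.univ.erase (1 : N ≃ₐ[K] N),
        (x - RingOfIntegers.mapRingEquiv (s : N ≃+* N) x) := by
  have hint : IsIntegral (𝓞 K) x := Algebra.IsIntegral.isIntegral x
  apply FaithfulSMul.algebraMap_injective (𝓞 N) N
  rw [map_prod, ← aeval_algebraMap_apply, ← aeval_map_algebraMap K, ← derivative_map,
    ← minpoly.isIntegrallyClosed_eq_field_fractions K N hint, ← eval_map_algebraMap,
    ← derivative_map, minpoly_eq_prod K _ hx,
    ← Finset.mul_prod_erase Finset.univ _ (Finset.mem_univ (1 : N ≃ₐ[K] N)), derivative_mul]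
  simp [eval_prod]

lemma colon_le {B : Type*} [CommRing B] (I J : Ideal B)
    (h : ∀ P : Ideal B, P.IsMaximal → ∃ c, c ∉ P ∧ Ideal.span {c} * I ≤ J) : I ≤ J := by
  intro z hz
  by_contra hzJ
  have hne : Submodule.colon J {z} ≠ ⊤ := by
    intro he
    have : (1 : B) ∈ Submodule.colon J {z} := by rw [he]; trivial
    rw [Submodule.mem_colon_singleton] at this
    exact hzJ (by simpa using this)
  obtain ⟨P, hP, hle⟩ := Ideal.exists_le_maximal _ hne
  obtain ⟨c, hc, hcI⟩ := h P hP
  apply hc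
  apply hle
  rw [Submodule.mem_colon_singleton]
  exact hcI (Ideal.mul_mem_mul (Ideal.mem_span_singleton_self c) hz)

theorem different_eq_prod (K : Type*) [Field K] [NumberField K] [Algebra K N]
    [FiniteDimensional K N] [IsGalois K N] [DecidableEq (N ≃ₐ[K] N)] :
    differentIdeal (𝓞 K) (𝓞 N) =
      ∏ s ∈ Finset.univ.erase (1 : N ≃ₐ[K] N), ramI (s : N ≃+* N) := by
  have main : ∀ P : Ideal (𝓞 N), P.IsMaximal → ∃ x c : 𝓞 N, c ∉ P ∧ c ∈ conductor ℤ x ∧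
      conductor (𝓞 K) x * differentIdeal (𝓞 K) (𝓞 N) =
      ∏ s ∈ Finset.univ.erase (1 : N ≃ₐ[K] N),
        Ideal.span {x - RingOfIntegers.mapRingEquiv (s : N ≃+* N) x} := by
    intro P hP
    have hP0 : P ≠ ⊥ := Ring.ne_bot_of_isMaximal_of_not_isField hP (RingOfIntegers.not_isField N)
    have := hP.isPrime
    obtain ⟨x, c, hc, hcP⟩ := exists_local_gen P hP0
    have hc0 : c ≠ 0 := by rintro rfl; exact hcP P.zero_mem
    have htop := adjoin_eq_top_of_conductor K x c hc hc0
    refine ⟨x, c, hcP, hc, ?_⟩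
    rw [conductor_mul_differentIdeal (𝓞 K) K N x htop, deriv_eq_prod K x htop,
      Ideal.prod_span_singleton]
  apply le_antisymm
  · apply colon_le
    intro P hP
    obtain ⟨x, c, hcP, hc, he⟩ := main P hP
    refine ⟨c, hcP, ?_⟩
    calc Ideal.span {c} * differentIdeal (𝓞 K) (𝓞 N)
        ≤ conductor (𝓞 K) x * differentIdeal (𝓞 K) (𝓞 N) := by
          refine Ideal.mul_mono_left ?_
          rw [Ideal.span_singleton_le_iff_mem]
          intro b
          exact adjoin_int_le x _ (hc b)
      _ = _ := he
      _ ≤ _ := by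
          refine Finset.prod_le_prod' fun s _ => ?_
          rw [Ideal.span_singleton_le_iff_mem]
          exact Ideal.subset_span ⟨x, rfl⟩
  · apply colon_le
    intro P hP
    obtain ⟨x, c, hcP, hc, he⟩ := main P hP
    refine ⟨c ^ (Finset.univ.erase (1 : N ≃ₐ[K] N)).card,
      fun h => hcP (hP.isPrime.mem_of_pow_mem _ h), ?_⟩
    rw [← Ideal.span_singleton_pow, ← Finset.prod_const, ← Finset.prod_mul_distrib]
    calc _ ≤ ∏ s ∈ Finset.univ.erase (1 : N ≃ₐ[K] N),
        Ideal.span {x - RingOfIntegers.mapRingEquiv (s : N ≃+* N) x} :=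
          Finset.prod_le_prod' fun s _ => conductor_mul_ramI _ x c hc
      _ = _ := he.symm
      _ ≤ _ := Ideal.mul_le_right

lemma discr_formula (K : Type*) [Field K] [NumberField K] [Algebra K N]
    [FiniteDimensional K N] [IsGalois K N] [DecidableEq (N ≃ₐ[K] N)] :
    (discr N).natAbs =
      (∏ s ∈ Finset.univ.erase (1 : N ≃ₐ[K] N), Ideal.absNorm (ramI (s : N ≃+* N))) *
      (discr K).natAbs ^ Module.finrank K N := by
  rw [← map_prod, ← different_eq_prod]
  exact natAbs_discr_eq_absNorm_differentIdeal_mul_natAbs_discr_pow K (𝓞 K) N (𝓞 N)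

lemma absNorm_ramI_conj (g s : N ≃+* N) :
    Ideal.absNorm (ramI (g * s * g⁻¹)) = Ideal.absNorm (ramI s) := by
  have h : ramI (g * s * g⁻¹) = (ramI s).map (RingOfIntegers.mapRingEquiv g : 𝓞 N →+* 𝓞 N) := by
    rw [ramI, ramI, Ideal.map_span]
    congr 1
    ext z
    constructor
    · rintro ⟨b, rfl⟩
      refine ⟨_, ⟨RingOfIntegers.mapRingEquiv g⁻¹ b, rfl⟩, ?_⟩
      ext
      simp [RingOfIntegers.mapRingEquiv_apply]
    · rintro ⟨_, ⟨b, rfl⟩, rfl⟩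
      refine ⟨RingOfIntegers.mapRingEquiv g b, ?_⟩
      ext
      simp [RingOfIntegers.mapRingEquiv_apply]
  rw [Ideal.absNorm_apply, Ideal.absNorm_apply, Submodule.cardQuot_apply, Submodule.cardQuot_apply]
  exact (Nat.card_congr (Ideal.quotientEquiv _ _ (RingOfIntegers.mapRingEquiv g) h).toEquiv).symm

end nf

lemma discr_pow (N : Type) [Field N] [NumberField N] [IsGalois ℚ N] (K : IntermediateField ℚ N)
    [DecidablePred (· ∈ K.fixingSubgroup)] :
    (NumberField.discr K).natAbs ^ Nat.card K.fixingSubgroup =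
      ∏ t : N ≃ₐ[ℚ] N, if t ∈ K.fixingSubgroup then 1
        else Ideal.absNorm (ramI (t : N ≃+* N)) := by
  classical
  set w : (N ≃ₐ[ℚ] N) → ℕ := fun t => Ideal.absNorm (ramI (t : N ≃+* N)) with hw
  have h1 := discr_formula (N := N) ℚ
  have h2 := discr_formula (N := N) K
  rw [Rat.numberField_discr] at h1
  simp only [Int.natAbs_one, one_pow, mul_one] at h1
  have hfr : Module.finrank K N = Nat.card K.fixingSubgroup :=
    (IsGalois.card_fixingSubgroup_eq_finrank K).symm
  rw [hfr] at h2
  have hN : (NumberField.discr N).natAbs ≠ 0 := by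
    simpa using NumberField.discr_ne_zero N
  have h3 : (∏ s ∈ Finset.univ.erase (1 : N ≃ₐ[K] N), Ideal.absNorm (ramI (s : N ≃+* N))) =
      ∏ t ∈ (Finset.univ.erase (1 : N ≃ₐ[ℚ] N)).filter (· ∈ K.fixingSubgroup), w t := by
    symm
    refine Finset.prod_bij' (fun t ht => IntermediateField.fixingSubgroupEquiv K
        ⟨t, (Finset.mem_filter.1 ht).2⟩)
      (fun s _ => ((IntermediateField.fixingSubgroupEquiv K).symm s : N ≃ₐ[ℚ] N)) ?_ ?_ ?_ ?_ ?_
    · intro t ht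
      simp only [Finset.mem_erase, Finset.mem_univ, and_true]
      intro h
      have h' := (MulEquiv.map_eq_one_iff _).1 h
      have := (Finset.mem_erase.1 (Finset.mem_filter.1 ht).1).1
      exact this (congrArg Subtype.val h')
    · intro s hs
      rw [Finset.mem_filter]
      refine ⟨Finset.mem_erase.2 ⟨?_, Finset.mem_univ _⟩, Subtype.property _⟩
      intro h
      have := (Finset.mem_erase.1 hs).1
      apply this
      have h' : (IntermediateField.fixingSubgroupEquiv K).symm s = 1 := Subtype.ext h
      exact (MulEquiv.map_eq_one_iff _).1 h'
    · intro t ht; simp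
    · intro s hs; simp
    · intro t ht; rfl
  rw [h3, h1, ← Finset.prod_filter_mul_prod_filter_not _ (· ∈ K.fixingSubgroup)] at h2
  have hne : ∏ t ∈ (Finset.univ.erase (1 : N ≃ₐ[ℚ] N)).filter (· ∈ K.fixingSubgroup), w t ≠ 0 := by
    intro h0
    apply hN
    rw [h1, ← Finset.prod_filter_mul_prod_filter_not _ (· ∈ K.fixingSubgroup)]
    exact mul_eq_zero_of_left h0 _
  have h4 := Nat.eq_of_mul_eq_mul_left (Nat.pos_of_ne_zero hne) h2
  rw [← h4, Finset.prod_ite, Finset.prod_const_one, one_mul]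
  refine Finset.prod_congr ?_ fun _ _ => rfl
  ext t
  simp only [Finset.mem_filter, Finset.mem_erase, Finset.mem_univ, true_and, and_true]
  constructor
  · exact fun h => h.2
  · exact fun h => ⟨fun h1 => h (h1 ▸ one_mem _), h⟩

/-- If `N/ℚ` is Galois with group `PSL₂(𝔽₇)` and `K₇`, `K₈` are subfields of `N` of
degrees 7 and 8 over `ℚ`, then `D_{K₇} ∣ D_{K₈}` and `D_{K₈} ∣ D_{K₇}²`. -/
theorem stmt11 (N : Type) [Field N] [NumberField N] [IsGalois ℚ N]
    (hgal : Nonempty ((N ≃ₐ[ℚ] N) ≃* PSL(2, ZMod 7)))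
    (K₇ K₈ : IntermediateField ℚ N)
    (h7 : Module.finrank ℚ K₇ = 7) (h8 : Module.finrank ℚ K₈ = 8) :
    NumberField.discr K₇ ∣ NumberField.discr K₈ ∧
    NumberField.discr K₈ ∣ (NumberField.discr K₇) ^ 2 := by
  classical
  obtain ⟨e⟩ := hgal
  have : Fact (Nat.Prime 7) := ⟨by norm_num⟩
  have hs0 : IsSimpleGroup PSL(2, ZMod 7) :=
    Matrix.ProjectiveSpecialLinearGroup.rank_two_simple (by simp)
  have hs : IsSimpleGroup (N ≃ₐ[ℚ] N) := e.isSimpleGroup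
  have hG : Nat.card (N ≃ₐ[ℚ] N) = 168 := by
    rw [Nat.card_congr e.toEquiv, card_PSL27]
  rw [IntermediateField.finrank_eq_fixingSubgroup_index] at h7 h8
  have main := group_main hs hG K₇.fixingSubgroup K₈.fixingSubgroup h7 h8
    (fun t => Ideal.absNorm (ramI (t : N ≃+* N)))
    (fun g t => absNorm_ramI_conj (g : N ≃+* N) (t : N ≃+* N))
    _ _ (discr_pow N K₇) (discr_pow N K₈)
  refine ⟨Int.natAbs_dvd_natAbs.1 main.1, Int.natAbs_dvd_natAbs.1 ?_⟩
  rw [Int.natAbs_pow]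
  exact main.2
end
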